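/- Let V ⊆ ℂ^n be an irreducible variety of dimension d, let 0 ≤ s ≤ n−d be an integer, and let k and m be positive integers satisfying 2s·δ_s(V) ≤ m < δ_{s+1}(V) and c_0·m^{n−s}·Δ_s(V) > k. Then the affine Hilbert function of the ideal of V satisfies H_{I(V)}(m) > k. -/

import Mathlib

open MvPolynomial Set

noncomputable section

namespace Paper

variable (n : ℕ)

/-- The zero locus in `ℂⁿ` of a set of polynomials. -/
def zeroLocus (I : Set (MvPolynomial (Fin n) ℂ)) : Set (Fin n → ℂ) :=
  {x | ∀ f ∈ I, eval x f = 0}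

/-- A subset of `ℂⁿ` is algebraic if it is the zero locus of a set of polynomials. -/
def IsAlgebraicSet (V : Set (Fin n → ℂ)) : Prop :=
  ∃ I : Set (MvPolynomial (Fin n) ℂ), V = zeroLocus n I

/-- An irreducible (affine) variety in `ℂⁿ`: a nonempty algebraic set that is not covered
by two algebraic sets unless it is contained in one of them. -/
def IsIrredVariety (V : Set (Fin n → ℂ)) : Prop :=
  IsAlgebraicSet n V ∧ V.Nonempty ∧
    ∀ V₁ V₂ : Set (Fin n → ℂ), IsAlgebraicSet n V₁ → IsAlgebraicSet n V₂ →
      V ⊆ V₁ ∪ V₂ → V ⊆ V₁ ∨ V ⊆ V₂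

/-- There is a strictly increasing chain of `d + 1` irreducible varieties inside `V`. -/
def HasChain (V : Set (Fin n → ℂ)) (d : ℕ) : Prop :=
  ∃ W : Fin (d + 1) → Set (Fin n → ℂ),
    (∀ i, IsIrredVariety n (W i)) ∧ (∀ i j : Fin (d + 1), i < j → W i ⊂ W j) ∧
      W (Fin.last d) ⊆ V

/-- The (Krull) dimension of a subset of `ℂⁿ`, as the length of the longest chain of
irreducible subvarieties. -/
def dim (V : Set (Fin n → ℂ)) : ℕ := sSup {d | HasChain n V d}

/-- `W` is an irreducible component of `X`: an irreducible subvariety that is maximal among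
irreducible subvarieties of `X`. -/
def IsIrredComponent (W X : Set (Fin n → ℂ)) : Prop :=
  IsIrredVariety n W ∧ W ⊆ X ∧
    ∀ W', IsIrredVariety n W' → W ⊆ W' → W' ⊆ X → W' = W

/-- The degree of an irreducible variety `V ⊆ ℂⁿ` of dimension `d` (i.e. the degree of its
projective closure): the largest finite number of points in which an affine-linear subspace of
dimension `n - d` meets `V`. -/
def degree (V : Set (Fin n → ℂ)) : ℕ :=
  sSup { m | ∃ L : AffineSubspace ℂ (Fin n → ℂ),
    Module.finrank ℂ L.direction = n - dim n V ∧ (V ∩ ↑L).Finite ∧ (V ∩ ↑L).ncard = m }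

/-- The degree of an algebraic set: the sum of the degrees of its irreducible components. -/
def degreeSum (X : Set (Fin n → ℂ)) : ℕ :=
  ∑ᶠ W ∈ {W | IsIrredComponent n W X}, degree n W

/-- The maximal dimension of an irreducible component of `X` containing `V` equals `e`. -/
def MaxCompDimEq (X V : Set (Fin n → ℂ)) (e : ℕ) : Prop :=
  (∃ W, IsIrredComponent n W X ∧ V ⊆ W ∧ dim n W = e) ∧
    ∀ W, IsIrredComponent n W X → V ⊆ W → dim n W ≤ e

/-- The partial degrees `δ_i(V)` of an irreducible variety `V`:  the minimal `δ` such that there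
are polynomials of degree at most `δ` cutting out an algebraic set containing `V` whose
irreducible components containing `V` have maximal dimension `n - i`.  By convention
`δ_0(V) = 0`. -/
def partialDeg (V : Set (Fin n → ℂ)) (i : ℕ) : ℕ :=
  if i = 0 then 0
  else sInf { δ | ∃ I : Finset (MvPolynomial (Fin n) ℂ),
    (∀ f ∈ I, f.totalDegree ≤ δ) ∧ V ⊆ zeroLocus n ↑I ∧
      MaxCompDimEq n (zeroLocus n ↑I) V (n - i) }

/-- The partial degrees as extended naturals, with the convention `δ_i(V) = ∞` for
`i > n - dim V`. -/
def partialDegE (V : Set (Fin n → ℂ)) (i : ℕ) : ℕ∞ :=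
  if i ≤ n - dim n V then (partialDeg n V i : ℕ∞) else ⊤

/-- `δ(V)` for an irreducible variety `V`: the minimal `δ` such that `V` is an irreducible
component of the zero set of a finite family of polynomials of degree at most `δ`. -/
def deltaIrr (V : Set (Fin n → ℂ)) : ℕ :=
  sInf { δ | ∃ I : Finset (MvPolynomial (Fin n) ℂ),
    (∀ f ∈ I, f.totalDegree ≤ δ) ∧ IsIrredComponent n V (zeroLocus n ↑I) }

/-- `δ(V)` for a general algebraic set `V`: the minimal `δ` such that every irreducible
component of `V` is an irreducible component of the zero set of a finite family of polynomials
of degree at most `δ`. -/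
def deltaSet (V : Set (Fin n → ℂ)) : ℕ :=
  sInf { δ | ∃ I : Finset (MvPolynomial (Fin n) ℂ),
    (∀ f ∈ I, f.totalDegree ≤ δ) ∧
      ∀ W, IsIrredComponent n W V → IsIrredComponent n W (zeroLocus n ↑I) }

/-- An algebraic set all of whose irreducible components have dimension `d`. -/
def IsAlgSetOfDim (V : Set (Fin n → ℂ)) (d : ℕ) : Prop :=
  IsAlgebraicSet n V ∧ V.Nonempty ∧ ∀ W, IsIrredComponent n W V → dim n W = d

/-- `Δ_i(V) = max (deg V / (δ_{i+1}(V) ⋯ δ_{n-d}(V))) 1`. -/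
def Delta (V : Set (Fin n → ℂ)) (i : ℕ) : ℝ :=
  max ((degree n V : ℝ) / ∏ j ∈ Finset.Icc (i + 1) (n - dim n V), (partialDeg n V j : ℝ)) 1

/-- `i` is admissible with respect to `V` if `δ_{i+1}(V) > 2 i δ_i(V)` (with the convention
`δ_i(V) = ∞` for `i > n - dim V`). -/
def Admissible (V : Set (Fin n → ℂ)) (i : ℕ) : Prop :=
  ((2 * i : ℕ) : ℕ∞) * partialDegE n V i < partialDegE n V (i + 1)

/-- The interval `ℛ_i(V) = [c₁ δ_i(V)^{n-i} Δ_i(V), (c₀/2) δ_{i+1}(V)^{n-i} Δ_i(V)]`,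
where `δ_{n-d+1}(V) = ∞` makes the last interval a half-line. -/
def RSet (c0 c1 : ℝ) (V : Set (Fin n → ℂ)) (i : ℕ) : Set ℝ :=
  if i = n - dim n V then
    Set.Ici (c1 * (partialDeg n V i : ℝ) ^ (n - i) * Delta n V i)
  else
    Set.Icc (c1 * (partialDeg n V i : ℝ) ^ (n - i) * Delta n V i)
      ((c0 / 2) * (partialDeg n V (i + 1) : ℝ) ^ (n - i) * Delta n V i)

/-- The interval `ℛ^l_{s,τ}(V) = [τ δ_s(V)^{n-(s+l)} Δ_s(V), τ δ_{s+1}(V)^{n-(s+l)} Δ_s(V)]`,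
where `δ_{n-d+1}(V) = ∞` makes the last interval a half-line. -/
def RlSet (τ : ℝ) (l : ℕ) (V : Set (Fin n → ℂ)) (s : ℕ) : Set ℝ :=
  if s = n - dim n V then
    Set.Ici (τ * (partialDeg n V s : ℝ) ^ (n - (s + l)) * Delta n V s)
  else
    Set.Icc (τ * (partialDeg n V s : ℝ) ^ (n - (s + l)) * Delta n V s)
      (τ * (partialDeg n V (s + 1) : ℝ) ^ (n - (s + l)) * Delta n V s)

/-- The ideal `I(V)` of polynomials vanishing on `V ⊆ ℂⁿ`. -/
def vanishingIdeal (V : Set (Fin n → ℂ)) : Ideal (MvPolynomial (Fin n) ℂ) where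
  carrier := {f | ∀ x ∈ V, eval x f = 0}
  add_mem' := by
    intro a b ha hb x hx
    simp [ha x hx, hb x hx]
  zero_mem' := by
    intro x hx
    simp
  smul_mem' := by
    intro c f hf x hx
    simp [smul_eq_mul, hf x hx]

/-- The ideal `I_ℝ(V)` of real polynomials vanishing on `V ⊆ ℂⁿ`. -/
def vanishingIdealR (V : Set (Fin n → ℂ)) : Ideal (MvPolynomial (Fin n) ℝ) :=
  (vanishingIdeal n V).comap (MvPolynomial.map (algebraMap ℝ ℂ))

/-- The affine Hilbert function `H_{I(V)}(m) = dim_ℂ ℂ[x]_{≤ m} / I(V)_{≤ m}`, realised as the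
dimension of the image of the space of polynomials of total degree at most `m` in the quotient
ring `ℂ[x]/I(V)`. -/
def hilbert (V : Set (Fin n → ℂ)) (m : ℕ) : ℕ :=
  Module.finrank ℂ
    (Submodule.map (Ideal.Quotient.mkₐ ℂ (vanishingIdeal n V)).toLinearMap
      (restrictTotalDegree (Fin n) ℂ m))

/-- The real affine Hilbert function `H_{I(V),ℝ}(m) = dim_ℝ ℝ[x]_{≤ m} / I_ℝ(V)_{≤ m}`. -/
def hilbertR (V : Set (Fin n → ℂ)) (m : ℕ) : ℕ :=
  Module.finrank ℝ
    (Submodule.map (Ideal.Quotient.mkₐ ℝ (vanishingIdealR n V)).toLinearMap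
      (restrictTotalDegree (Fin n) ℝ m))

/-- The inclusion `ℝⁿ → ℂⁿ`. -/
def toC (x : Fin n → ℝ) : Fin n → ℂ := fun i => (x i : ℂ)

/-- The set of real points of `V ⊆ ℂⁿ`. -/
def realPts (V : Set (Fin n → ℂ)) : Set (Fin n → ℝ) := {x | toC n x ∈ V}

/-- The real zero set of a real polynomial. -/
def zeroSetR (g : MvPolynomial (Fin n) ℝ) : Set (Fin n → ℝ) := {x | eval x g = 0}

/-- The zero locus of the polynomials `P 1, …, P i` (the first `i` members of a tuple of
polynomials indexed from `1`). -/
def zeroLocusUpTo (P : ℕ → MvPolynomial (Fin n) ℂ) (i : ℕ) : Set (Fin n → ℂ) :=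
  zeroLocus n {f | ∃ j : ℕ, 1 ≤ j ∧ j ≤ i ∧ f = P j}

/-- `V'` is an `(n-s)`-minimal variety of the irreducible variety `V`. -/
def IsMinimalVariety (V V' : Set (Fin n → ℂ)) (s : ℕ) : Prop :=
  IsIrredVariety n V' ∧ V ⊆ V' ∧ dim n V' = n - s ∧
    ∀ f ∈ vanishingIdeal n V, f ∉ vanishingIdeal n V' →
      partialDegE n V (s + 1) ≤ (f.totalDegree : ℕ∞)

/-- `S` is `(k,b)`-free with respect to `T`, for the incidence relation `R`. -/
def KBFree {α β : Type*} (R : α → β → Prop) (S : Finset α) (T : Finset β) (k b : ℕ) : Prop :=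
  ¬ ∃ (P : Finset α) (B : Finset β), P ⊆ S ∧ B ⊆ T ∧ P.card = k ∧ B.card = b ∧
      ∀ s ∈ P, ∀ t ∈ B, R s t

/-- The number of incidences between a finite set of points and a finite family of sets. -/
def incCountAbs {α : Type*} (S : Finset α) (T : Finset (Set α)) : ℕ :=
  ∑ t ∈ T, (↑S ∩ t).ncard

/-- The number of incidences between a finite set of real points and a finite family of
subsets of `ℂⁿ`. -/
def incCount (S : Finset (Fin n → ℝ)) (T : Finset (Set (Fin n → ℂ))) : ℕ :=
  ∑ t ∈ T, (↑S ∩ toC n ⁻¹' t).ncard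

/-- The total degree `deg T = ∑_{t ∈ T} deg t` of a finite family of algebraic sets. -/
def degFamily (T : Finset (Set (Fin n → ℂ))) : ℕ := ∑ t ∈ T, degreeSum n t

/-- The total degree of a finite family of irreducible varieties. -/
def degFamilyIrred (T : Finset (Set (Fin n → ℂ))) : ℕ := ∑ t ∈ T, degree n t

/-- `α_k(d)`. -/
def alpha (k d : ℕ) : ℝ :=
  if k = 1 ∧ d = 1 then 0 else (k : ℝ) * ((d : ℝ) - 1) / ((d : ℝ) * (k : ℝ) - 1)

/-- `β_k(d)`. -/
def beta (k d : ℕ) : ℝ :=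
  if k = 1 ∧ d = 1 then 1 else (d : ℝ) * ((k : ℝ) - 1) / ((d : ℝ) * (k : ℝ) - 1)

/-- `τ_d(b,k) = b^{1-β_k(d)} k^{1-α_k(d)}`. -/
def tauC (d b k : ℕ) : ℝ := (b : ℝ) ^ (1 - beta k d) * (k : ℝ) ^ (1 - alpha k d)

/-- The Chardin–Philippon property of the constant `c₀`: for every pure-dimensional algebraic
set `W ⊆ ℂⁿ` and every `m ≥ 2 (n - dim W) δ(W)` one has `H_{I(W)}(m) ≥ c₀ m^{dim W} deg W`. -/
def ChardinPhilippon (c0 : ℝ) : Prop :=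
  ∀ (W : Set (Fin n → ℂ)) (e : ℕ), IsAlgSetOfDim n W e →
    ∀ m : ℕ, 2 * (n - e) * deltaSet n W ≤ m →
      c0 * (m : ℝ) ^ e * (degreeSum n W : ℝ) ≤ (hilbert n W m : ℝ)

/-- The defining property of the constant `c₁`: for every irreducible variety `V`, every
positive integer lies in some interval `ℛ_i(V)` with `i` admissible with respect to `V`. -/
def CoversPositiveIntegers (c0 c1 : ℝ) : Prop :=
  ∀ V : Set (Fin n → ℂ), IsIrredVariety n V →
    ∀ m : ℕ, 0 < m → ∃ i, Admissible n V i ∧ (m : ℝ) ∈ RSet n c0 c1 V i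

/-- `i_V(M)`: the smallest admissible `i` such that `M^{n-i} Δ_i(V) ∈ ℛ_i(V)`. -/
def iV (c0 c1 : ℝ) (V : Set (Fin n → ℂ)) (M : ℕ) : ℕ :=
  sInf {i | Admissible n V i ∧ (M : ℝ) ^ (n - i) * Delta n V i ∈ RSet n c0 c1 V i}

/-- A real polynomial bisects a finite set `S ⊆ ℝⁿ` if it is positive on at most half of `S`
and negative on at most half of `S`. -/
def Bisects (g : MvPolynomial (Fin n) ℝ) (S : Finset (Fin n → ℝ)) : Prop :=
  ((↑S ∩ {x | 0 < eval x g}).ncard : ℝ) ≤ (S.card : ℝ) / 2 ∧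
    ((↑S ∩ {x | eval x g < 0}).ncard : ℝ) ≤ (S.card : ℝ) / 2

/-- The set of `r`-rich points of a family `T`: points lying in at least `r` members of `T`. -/
def richPts (T : Finset (Set (Fin n → ℂ))) (r : ℕ) : Set (Fin n → ℂ) :=
  {x | r ≤ ({t | t ∈ T ∧ x ∈ t} : Set (Set (Fin n → ℂ))).ncard}

/-- A real hypersurface of degree at most `D`: the real zero set of a nonzero real polynomial
of degree at most `D`. -/
def IsRealHypersurfaceDegLE (t : Set (Fin n → ℝ)) (D : ℕ) : Prop :=
  ∃ p : MvPolynomial (Fin n) ℝ, p ≠ 0 ∧ t = zeroSetR n p ∧ p.totalDegree ≤ D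

/-- Lexicographic comparison of the tuples `(f 1, …, f m)` and `(g 1, …, g m)`. -/
def LexLE (m : ℕ) (f g : ℕ → ℕ) : Prop :=
  (∀ j ∈ Finset.Icc 1 m, f j = g j) ∨
    ∃ i ∈ Finset.Icc 1 m, (∀ j, 1 ≤ j → j < i → f j = g j) ∧ f i < g i

/-!
Let `m` be below `δ_{s+1}(V)` and at least `δ_s(V)`. The polynomials of degree at most `m`
vanishing on `V` cut out an algebraic set with a component `W ⊇ V` of dimension exactly `n - s`,
and they all vanish on `W`; hence `H_{I(V)}(m) ≥ H_{I(W)}(m)`. Since `W` is itself cut out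
locally by polynomials of degree at most `δ_s(V)`, the Chardin–Philippon bound applies to `W` and
gives `H_{I(W)}(m) ≥ c₀ m^{n-s} deg W`.

It remains to see `deg W ≥ Δ_s(V)`. Cutting `W` successively by hypersurfaces through `V` of
degrees at most `δ_{s+1}(V), …, δ_{n-d}(V)` descends to `V`, and Bézout gives
`deg V ≤ δ_{s+1}(V) ⋯ δ_{n-d}(V) · deg W`. The Bézout step `deg X' ≤ deg f · deg X`, for `X'` a
hypersurface section of `X` by `f`, compares Hilbert functions: counting points in linear sections
identifies `deg X / (dim X)!` with the leading coefficient of the Hilbert function of `X`, by means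
of a Noether normalization by linear forms and the generic rank of `ℂ[X]` over it.
-/

section LinearNormalization

variable {k B ι : Type*} [Field k] [CommRing B] [Algebra k B]

/-- The `k`-subspace of `B` spanned by `1` and a family `y`. For a family of coordinate functions,
its `m`-th power consists of the functions of degree at most `m`. -/
def affineForms (k : Type*) {B ι : Type*} [Field k] [CommRing B] [Algebra k B] (y : ι → B) :
    Submodule k B :=
  Submodule.span k (insert 1 (range y))

lemma one_mem_affineForms (y : ι → B) : (1 : B) ∈ affineForms k y :=
  Submodule.subset_span (mem_insert ..)

lemma mem_affineForms (y : ι → B) (i : ι) : y i ∈ affineForms k y :=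
  Submodule.subset_span (mem_insert_of_mem _ ⟨i, rfl⟩)

lemma affineForms_le_iff {y : ι → B} {S : Submodule k B} :
    affineForms k y ≤ S ↔ 1 ∈ S ∧ ∀ i, y i ∈ S := by
  rw [affineForms, Submodule.span_le, insert_subset_iff, range_subset_iff]
  rfl

lemma affineForms_fg [Finite ι] (y : ι → B) : (affineForms k y).FG :=
  Submodule.fg_span ((finite_range y).insert 1)

lemma affineForms_pow_mono (y : ι → B) : Monotone fun m => affineForms k y ^ m :=
  pow_right_monotone (Submodule.one_le.2 (one_mem_affineForms y))

lemma multiset_prod_mem_pow {Y : Submodule k B} {y : ι → B} (hy : ∀ i, y i ∈ Y)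
    (s : Multiset ι) : (s.map y).prod ∈ Y ^ s.card := by
  induction s using Multiset.induction_on with
  | empty => simp [Submodule.one_eq_span, Submodule.mem_span_singleton_self]
  | cons i s ih =>
    rw [Multiset.map_cons, Multiset.prod_cons, Multiset.card_cons, pow_succ']
    exact Submodule.mul_mem_mul (hy i) ih

lemma aeval_eq_sum_multiset_prod (y : ι → B) (F : MvPolynomial ι k) :
    aeval y F = ∑ α ∈ F.support, coeff α F • (α.toMultiset.map y).prod := by
  conv_lhs => rw [F.as_sum]
  rw [map_sum]
  refine Finset.sum_congr rfl fun α _ => ?_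
  rw [aeval_monomial, Algebra.smul_def, Finsupp.toMultiset_map, Finsupp.prod_toMultiset,
    Finsupp.prod_mapDomain_index (by simp) (by simp [pow_add])]

lemma aeval_mem_affineForms_pow (y : ι → B) {F : MvPolynomial ι k} {m : ℕ}
    (hF : F.totalDegree ≤ m) : aeval y F ∈ affineForms k y ^ m := by
  rw [aeval_eq_sum_multiset_prod]
  refine Submodule.sum_mem _ fun α hα => Submodule.smul_mem _ _ ?_
  refine affineForms_pow_mono y ?_ (multiset_prod_mem_pow (mem_affineForms y) _)
  rw [Finsupp.card_toMultiset]
  exact (le_totalDegree hα).trans hF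

lemma affineForms_pow_eq_map (y : ι → B) (m : ℕ) :
    affineForms k y ^ m = (restrictTotalDegree ι k m).map (aeval y).toLinearMap := by
  refine le_antisymm ?_ ?_
  · induction m with
    | zero => exact Submodule.one_le.2 ⟨1, by simp [mem_restrictTotalDegree], by simp⟩
    | succ m ih =>
      have base : affineForms k y ≤ (restrictTotalDegree ι k 1).map (aeval y).toLinearMap :=
        affineForms_le_iff.2 ⟨⟨1, by simp [mem_restrictTotalDegree], by simp⟩,
          fun i => ⟨X i, by simp [mem_restrictTotalDegree], by simp⟩⟩
      rw [pow_succ, Submodule.mul_le]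
      intro a ha b hb
      obtain ⟨f, hf, rfl⟩ := ih ha
      obtain ⟨g, hg, rfl⟩ := base hb
      refine ⟨f * g, ?_, by simp⟩
      simp only [SetLike.mem_coe, mem_restrictTotalDegree] at *
      exact (totalDegree_mul f g).trans (add_le_add hf hg)
  · rintro _ ⟨F, hF, rfl⟩
    exact aeval_mem_affineForms_pow y ((mem_restrictTotalDegree _ _ _).1 hF)

lemma multiset_prod_sub_prod_mem {Y Z : Submodule k B} {a b : ι → B} (ha : ∀ i, a i ∈ Y)
    (hb : ∀ i, b i ∈ Y) (hab : ∀ i, a i - b i ∈ Z) (s : Multiset ι) :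
    (s.map a).prod - (s.map b).prod ∈ Z * Y ^ (s.card - 1) := by
  induction s using Multiset.induction_on with
  | empty => simp
  | cons i s ih =>
    have telescope : ((i ::ₘ s).map a).prod - ((i ::ₘ s).map b).prod =
        a i * ((s.map a).prod - (s.map b).prod) + (a i - b i) * (s.map b).prod := by
      simp only [Multiset.map_cons, Multiset.prod_cons]
      ring
    rw [telescope, Multiset.card_cons, Nat.add_sub_cancel]
    refine add_mem ?_ (Submodule.mul_mem_mul (hab i) (multiset_prod_mem_pow hb s))
    rcases s.empty_or_exists_mem with rfl | ⟨j, hj⟩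
    · simp
    · rw [← Nat.succ_pred_eq_of_pos (Multiset.card_pos_iff_exists_mem.2 ⟨j, hj⟩), pow_succ',
        mul_left_comm]
      exact Submodule.mul_mem_mul (ha i) ih

lemma card_toMultiset_eq {F : MvPolynomial ι k} {N : ℕ} (hF : F.IsHomogeneous N) {α : ι →₀ ℕ}
    (hα : α ∈ F.support) : α.toMultiset.card = N := by
  rw [Finsupp.card_toMultiset]
  exact by_contra fun h => mem_support_iff.1 hα (hF.coeff_eq_zero h)

lemma aeval_smul_eq {v : ι → k} {t : B} {F : MvPolynomial ι k} {N : ℕ} (hF : F.IsHomogeneous N) :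
    aeval (fun i => v i • t) F = eval v F • t ^ N := by
  rw [aeval_eq_sum_multiset_prod, ← coe_aeval_eq_eval, RingHom.coe_coe,
    aeval_eq_sum_multiset_prod, Finset.sum_smul]
  refine Finset.sum_congr rfl fun α hα => ?_
  rw [smul_eq_mul, mul_smul, ← card_toMultiset_eq hF hα]
  simp [Algebra.smul_def, Multiset.prod_map_mul, ← Multiset.prod_hom, Multiset.map_map]

lemma aeval_sub_aeval_mem {Y Z : Submodule k B} {a b : ι → B} (ha : ∀ i, a i ∈ Y)
    (hb : ∀ i, b i ∈ Y) (hab : ∀ i, a i - b i ∈ Z) {F : MvPolynomial ι k} {N : ℕ}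
    (hF : F.IsHomogeneous (N + 1)) : aeval a F - aeval b F ∈ Z * Y ^ N := by
  rw [aeval_eq_sum_multiset_prod, aeval_eq_sum_multiset_prod, ← Finset.sum_sub_distrib]
  refine Submodule.sum_mem _ fun α hα => ?_
  rw [← smul_sub]
  have hmem := multiset_prod_sub_prod_mem ha hb hab α.toMultiset
  rw [card_toMultiset_eq hF hα, Nat.add_sub_cancel] at hmem
  exact Submodule.smul_mem _ _ hmem

lemma totalDegree_sub_homogeneousComponent_le {F : MvPolynomial ι k} {N : ℕ}
    (hF : F.totalDegree = N + 1) :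
    (F - homogeneousComponent (N + 1) F).totalDegree ≤ N := by
  have hsum := sum_homogeneousComponent F
  rw [hF, Finset.sum_range_succ] at hsum
  rw [sub_eq_of_eq_add hsum.symm]
  exact totalDegree_finsetSum_le fun i hi =>
    (homogeneousComponent_isHomogeneous i F).totalDegree_le.trans
      (Nat.lt_succ_iff.1 (Finset.mem_range.1 hi))

lemma eval_homogeneousComponent_smul_pow_mem {y : ι → B} {F : MvPolynomial ι k} {N : ℕ}
    (hdeg : F.totalDegree = N + 1) (hF : aeval y F = 0) {Z : Submodule k B} (hZ : 1 ∈ Z)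
    {v : ι → k} {t : B} (ht : t ∈ affineForms k y) (hz : ∀ i, y i - v i • t ∈ Z) :
    eval v (homogeneousComponent (N + 1) F) • t ^ (N + 1) ∈ Z * affineForms k y ^ N := by
  have hG := homogeneousComponent_isHomogeneous (N + 1) F
  have htop := aeval_sub_aeval_mem (mem_affineForms y)
    (fun i => Submodule.smul_mem _ (v i) ht) hz hG
  have hlow := Submodule.mul_mem_mul hZ
    (aeval_mem_affineForms_pow y (totalDegree_sub_homogeneousComponent_le hdeg))
  rw [one_mul, map_sub, hF, zero_sub] at hlow
  rw [aeval_smul_eq hG] at htop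
  simpa using neg_mem (add_mem htop hlow)

lemma pow_succ_le_mul_pow_sup_span {Y Z : Submodule k B} {t : B} (ht : t ∈ Y)
    (hY : Y ≤ Z ⊔ Submodule.span k {t}) (N : ℕ) :
    Y ^ (N + 1) ≤ Z * Y ^ N ⊔ Submodule.span k {t ^ (N + 1)} := by
  induction N with
  | zero => simpa using hY
  | succ N ih =>
    calc Y ^ (N + 2) = Y ^ (N + 1) * Y := pow_succ ..
      _ ≤ (Z * Y ^ N ⊔ Submodule.span k {t ^ (N + 1)}) * Y := mul_le_mul' ih le_rfl
      _ = Z * Y ^ (N + 1) ⊔ Submodule.span k {t ^ (N + 1)} * Y := by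
        rw [Submodule.sup_mul, mul_assoc, ← pow_succ]
      _ ≤ Z * Y ^ (N + 1) ⊔
          (Z * Submodule.span k {t ^ (N + 1)} ⊔ Submodule.span k {t ^ (N + 2)}) := by
        refine sup_le_sup le_rfl ?_
        rw [mul_comm, pow_succ' t (N + 1), ← Set.singleton_mul_singleton,
          ← Submodule.span_mul_span, ← Submodule.sup_mul]
        exact mul_le_mul' hY le_rfl
      _ ≤ Z * Y ^ (N + 1) ⊔ Submodule.span k {t ^ (N + 2)} := by
        refine sup_le le_sup_left (sup_le_sup (mul_le_mul' le_rfl ?_) le_rfl)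
        exact (Submodule.span_singleton_le_iff_mem _ _).2 (Submodule.pow_mem_pow _ ht _)

lemma pow_add_le_pow_mul_pow {Y Z : Submodule k B} {N : ℕ} (h : Y ^ (N + 1) ≤ Z * Y ^ N) (m : ℕ) :
    Y ^ (m + N) ≤ Z ^ m * Y ^ N := by
  induction m with
  | zero => simp
  | succ m ih =>
    calc Y ^ (m + 1 + N) = Y ^ m * Y ^ (N + 1) := by rw [← pow_add]; congr 1; ring
      _ ≤ Y ^ m * (Z * Y ^ N) := mul_le_mul' le_rfl h
      _ = Z * Y ^ (m + N) := by rw [pow_add]; ring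
      _ ≤ Z * (Z ^ m * Y ^ N) := mul_le_mul' le_rfl ih
      _ = Z ^ (m + 1) * Y ^ N := by ring

lemma exists_eval_homogeneousComponent_ne_zero [Infinite k] {F : MvPolynomial ι k} (hF : F ≠ 0) :
    ∃ v, eval v (homogeneousComponent F.totalDegree F) ≠ 0 := by
  by_contra! hv
  have hG : homogeneousComponent F.totalDegree F = 0 :=
    MvPolynomial.funext fun v => by rw [hv v, map_zero]
  obtain ⟨α, hα, hdeg⟩ := Finset.exists_mem_eq_sup F.support (support_nonempty.2 hF)
    fun s => s.sum fun _ e => e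
  have hcoeff := congrArg (coeff α) hG
  rw [coeff_homogeneousComponent, if_pos (by rw [totalDegree, hdeg]; rfl)] at hcoeff
  exact mem_support_iff.1 hα hcoeff

lemma exists_totalDegree_eq_succ_of_aeval_eq_zero [Nontrivial B] {y : ι → B} {F : MvPolynomial ι k}
    (hF : F ≠ 0) (hy : aeval y F = 0) : ∃ N, F.totalDegree = N + 1 := by
  refine Nat.exists_eq_succ_of_ne_zero fun h0 => hF ?_
  rw [totalDegree_eq_zero_iff_eq_C] at h0
  rw [h0, aeval_C, map_eq_zero_iff _ (FaithfulSMul.algebraMap_injective k B)] at hy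
  rw [h0, hy, C_0]

-- A relation whose top form does not vanish at `v` becomes monic in `t` once every `y i` is
-- replaced by `y i - v i • t`.
lemma exists_affineForms_pow_succ_le [Infinite k] [Nontrivial B] {r : ℕ} (y : Fin (r + 1) → B)
    (h : ¬ AlgebraicIndependent k y) :
    ∃ z : Fin r → B, (∀ i, z i ∈ Submodule.span k (range y)) ∧
      ∃ N, affineForms k y ^ (N + 1) ≤ affineForms k z * affineForms k y ^ N := by
  rw [algebraicIndependent_iff] at h
  push Not at h
  obtain ⟨F, hF, hF0⟩ := h
  obtain ⟨N, hN⟩ := exists_totalDegree_eq_succ_of_aeval_eq_zero hF0 hF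
  obtain ⟨v, hv⟩ := exists_eval_homogeneousComponent_ne_zero hF0
  rw [hN] at hv
  obtain ⟨i₀, hi₀⟩ : ∃ i, v i ≠ 0 := by
    by_contra! h0
    rw [funext h0] at hv
    refine hv ?_
    simpa [h0, funext h0] using aeval_smul_eq (v := v) (t := (0 : k))
      (homogeneousComponent_isHomogeneous (N + 1) F)
  set t : B := (v i₀)⁻¹ • y i₀ with ht
  set z : Fin r → B := fun j => y (i₀.succAbove j) - v (i₀.succAbove j) • t with hz
  have hyz (i : Fin (r + 1)) : y i - v i • t ∈ affineForms k z := by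
    rcases Fin.eq_self_or_eq_succAbove i₀ i with rfl | ⟨j, rfl⟩
    · rw [ht, smul_smul, mul_inv_cancel₀ hi₀, one_smul, sub_self]
      exact zero_mem _
    · exact mem_affineForms z j
  have htY : t ∈ affineForms k y := Submodule.smul_mem _ _ (mem_affineForms y _)
  have hYt : affineForms k y ≤ affineForms k z ⊔ Submodule.span k {t} :=
    affineForms_le_iff.2 ⟨Submodule.mem_sup_left (one_mem_affineForms z), fun i => by
      rw [← sub_add_cancel (y i) (v i • t)]
      exact Submodule.add_mem_sup (hyz i)
        (Submodule.smul_mem _ _ (Submodule.mem_span_singleton_self t))⟩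
  refine ⟨z, fun j => ?_, N, (pow_succ_le_mul_pow_sup_span htY hYt N).trans (sup_le le_rfl ?_)⟩
  · exact sub_mem (Submodule.subset_span ⟨_, rfl⟩)
      (Submodule.smul_mem _ _ (Submodule.smul_mem _ _ (Submodule.subset_span ⟨_, rfl⟩)))
  · rw [Submodule.span_singleton_le_iff_mem, ← Submodule.smul_mem_iff _ hv]
    exact eval_homogeneousComponent_smul_pow_mem hN hF (one_mem_affineForms z) htY hyz

/-- `z` is a linear Noether normalization of the algebra generated by `y`: algebraically
independent linear combinations of the `y i` such that a function of degree at most `m` in `y`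
has degree at most `m` in `z` over a fixed finite-dimensional space of coefficients. Controlling
the degree, and not just integrality, is what makes Hilbert functions comparable. -/
structure IsLinearNormalization (k : Type*) {B ι κ : Type*} [Field k] [CommRing B] [Algebra k B]
    (y : ι → B) (z : κ → B) : Prop where
  mem_span : ∀ i, z i ∈ Submodule.span k (range y)
  algebraicIndependent : AlgebraicIndependent k z
  exists_coeff : ∃ U : Submodule k B, U.FG ∧ ∀ m, affineForms k y ^ m ≤ affineForms k z ^ m * U

lemma isLinearNormalization_self {y : ι → B} (h : AlgebraicIndependent k y) :
    IsLinearNormalization k y y :=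
  ⟨fun i => Submodule.subset_span ⟨i, rfl⟩, h, 1,
    Submodule.one_eq_span (R := k) (A := B) ▸ Submodule.fg_span_singleton _, fun m => by simp⟩

lemma exists_isLinearNormalization [Infinite k] [Nontrivial B] {r : ℕ} (y : Fin r → B) :
    ∃ (e : ℕ) (z : Fin e → B), IsLinearNormalization k y z := by
  induction r with
  | zero => exact ⟨0, y, isLinearNormalization_self <|
      algebraicIndependent_empty_type_iff.2 (FaithfulSMul.algebraMap_injective k B)⟩
  | succ r ih =>
    by_cases h : AlgebraicIndependent k y
    · exact ⟨r + 1, y, isLinearNormalization_self h⟩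
    obtain ⟨z, hz, N, hN⟩ := exists_affineForms_pow_succ_le y h
    obtain ⟨e, w, hw⟩ := ih z
    obtain ⟨U, hU, hUm⟩ := hw.exists_coeff
    refine ⟨e, w, fun i => ?_, hw.algebraicIndependent, U * affineForms k y ^ N,
      hU.mul ((affineForms_fg y).pow N), fun m => ?_⟩
    · exact Submodule.span_le.2 (range_subset_iff.2 hz) (hw.mem_span i)
    · calc affineForms k y ^ m ≤ affineForms k y ^ (m + N) :=
          affineForms_pow_mono y (Nat.le_add_right _ _)
        _ ≤ affineForms k z ^ m * affineForms k y ^ N := pow_add_le_pow_mul_pow hN m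
        _ ≤ affineForms k w ^ m * U * affineForms k y ^ N := mul_le_mul' (hUm m) le_rfl
        _ = _ := mul_assoc ..

lemma IsLinearNormalization.finite {κ : Type*} {y : ι → B} {z : κ → B}
    (h : IsLinearNormalization k y z) (hy : Function.Surjective (aeval (R := k) y)) :
    (aeval (R := k) z).toRingHom.Finite := by
  algebraize [(aeval (R := k) z).toRingHom]
  have : IsScalarTower k (MvPolynomial κ k) B :=
    .of_algebraMap_eq fun c => (aeval_C (R := k) z c).symm
  obtain ⟨_, ⟨S, rfl⟩, hS⟩ := h.exists_coeff
  refine ⟨⟨S, eq_top_iff.2 fun b _ => ?_⟩⟩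
  obtain ⟨f, rfl⟩ := hy b
  refine Submodule.mul_induction_on (hS _ (aeval_mem_affineForms_pow y le_rfl)) ?_
    fun _ _ => add_mem
  intro a ha u hu
  rw [affineForms_pow_eq_map] at ha
  obtain ⟨g, -, rfl⟩ := ha
  have hgu : (aeval z).toLinearMap g * u = g • u := (Algebra.smul_def g u).symm
  rw [hgu]
  exact Submodule.smul_mem _ _ (Submodule.span_le_restrictScalars k _ _ hu)

end LinearNormalization

section CoordinateRing

variable {k : Type*} [Field k] {n : ℕ}

/-- The coordinate functions on the affine scheme defined by an ideal. -/
def coord (P : Ideal (MvPolynomial (Fin n) k)) (i : Fin n) : MvPolynomial (Fin n) k ⧸ P :=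
  Ideal.Quotient.mk P (X i)

lemma aeval_coord (P : Ideal (MvPolynomial (Fin n) k)) :
    aeval (coord P) = Ideal.Quotient.mkₐ k P := by
  ext i
  simp [coord]

lemma aeval_coord_surjective (P : Ideal (MvPolynomial (Fin n) k)) :
    Function.Surjective (aeval (R := k) (coord P)) := by
  rw [aeval_coord]
  exact Ideal.Quotient.mkₐ_surjective k P

end CoordinateRing

section KrullDimension

lemma ringKrullDim_eq_of_isIntegral {A B : Type*} [CommRing A] [CommRing B] [Algebra A B]
    [Algebra.IsIntegral A B] (inj : Function.Injective (algebraMap A B)) :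
    ringKrullDim A = ringKrullDim B := by
  refine le_antisymm (iSup_le fun l => ?_) (Order.krullDim_le_of_strictMono
    (PrimeSpectrum.comap (algebraMap A B)) fun _ _ h => Ideal.IsIntegral.comap_lt_comap h)
  obtain ⟨Q, -, hQ, hQl⟩ := Ideal.exists_ideal_over_prime_of_isIntegral (S := B) l.head.asIdeal ⊥
    (by rw [← RingHom.ker_eq_comap_bot, (RingHom.injective_iff_ker_eq_bot _).1 inj]; exact bot_le)
  have : Q.LiesOver l.head.asIdeal := ⟨hQl.symm⟩
  obtain ⟨L, hL, -⟩ := Ideal.exists_ltSeries_of_hasGoingUp l Q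
  rw [← hL]
  exact Order.LTSeries.length_le_krullDim L

lemma ringKrullDim_mvPolynomial_fin (k : Type*) [Field k] (n : ℕ) :
    ringKrullDim (MvPolynomial (Fin n) k) = n := by
  rw [MvPolynomial.ringKrullDim_of_isNoetherianRing]
  simp

lemma height_eq_of_isMaximal {k : Type*} [Field k] {n : ℕ} (M : Ideal (MvPolynomial (Fin n) k))
    [hM : M.IsMaximal] : M.height = n := by
  induction n with
  | zero =>
    have h0 := Ideal.height_le_ringKrullDim_of_ne_top hM.ne_top
    rw [ringKrullDim_mvPolynomial_fin] at h0
    exact le_antisymm (by exact_mod_cast h0) bot_le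
  | succ n ih =>
    let φ := (finSuccEquiv k n).toRingEquiv
    have hφ : (M.comap φ.symm).IsMaximal := Ideal.comap_isMaximal_of_equiv φ.symm
    have hC := Polynomial.isMaximal_comap_C_of_isJacobsonRing (M.comap φ.symm)
    have : (M.comap φ.symm).LiesOver ((M.comap φ.symm).comap Polynomial.C) := ⟨rfl⟩
    rw [← RingEquiv.height_comap φ.symm, Polynomial.height_eq_height_add_one
      ((M.comap φ.symm).comap Polynomial.C), ih]
    rfl

lemma ringKrullDim_quotient_span_singleton_add_one {A : Type*} [CommRing A] [IsDomain A]
    [IsNoetherianRing A] (hA : ∀ M : Ideal A, M.IsMaximal → M.height = ringKrullDim A)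
    {a : A} (ha : a ≠ 0) (hu : ¬ IsUnit a) :
    ringKrullDim (A ⧸ Ideal.span {a}) + 1 = ringKrullDim A := by
  obtain ⟨M, hM, haM⟩ := Ideal.exists_le_maximal (Ideal.span {a})
    (by rwa [Ne, Ideal.span_singleton_eq_top])
  exact Module.ringKrullDim_quotient_add_one_of_mem_nonZeroDivisors
    (mem_nonZeroDivisors_of_ne_zero ha) (hA M hM) (haM (Ideal.mem_span_singleton_self a))

-- Going down keeps the contraction of `Q` at height one, hence principal.
lemma ringKrullDim_quotient_add_one_of_isIntegral {A B : Type*} [CommRing A] [IsDomain A]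
    [IsNoetherianRing A] [UniqueFactorizationMonoid A]
    (hA : ∀ M : Ideal A, M.IsMaximal → M.height = ringKrullDim A)
    [CommRing B] [IsDomain B] [IsNoetherianRing B] [Algebra A B] [Algebra.IsIntegral A B]
    (inj : Function.Injective (algebraMap A B)) {f : B} (hf : f ≠ 0) {Q : Ideal B}
    (hQ : Q ∈ (Ideal.span {f}).minimalPrimes) :
    ringKrullDim (B ⧸ Q) + 1 = ringKrullDim A := by
  have hQp : Q.IsPrime := hQ.1.1
  have : FaithfulSMul A B := (faithfulSMul_iff_algebraMap_injective _ _).2 inj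
  set p := Q.under A
  have hp0 : p ≠ ⊥ := Ideal.comap_ne_bot_of_integral_mem hf
    (hQ.1.2 (Ideal.mem_span_singleton_self f)) (Algebra.IsIntegral.isIntegral f)
  have hp1 : p.height = 1 := by
    refine le_antisymm ?_ (Order.one_le_iff_ne_zero.2 (Ideal.height_eq_zero_iff_eq_bot.not.2 hp0))
    have hQ1 := Ideal.height_le_one_of_isPrincipal_of_mem_minimalPrimes _ Q hQ
    rw [Ideal.height_eq_height_add_of_liesOver_of_hasGoingDown p Q] at hQ1
    exact le_self_add.trans hQ1
  obtain ⟨a, ha⟩ := UniqueFactorizationMonoid.isPrincipal_of_height_eq_one hp1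
  rw [Ideal.submodule_span_eq] at ha
  have hpA := ringKrullDim_quotient_span_singleton_add_one hA (a := a)
    (fun h => hp0 (by rw [ha, h, Ideal.span_singleton_eq_bot.2 rfl]))
    (fun h => hQp.under A |>.ne_top (ha.trans (Ideal.span_singleton_eq_top.2 h)))
  rw [← ha] at hpA
  rw [← hpA, ringKrullDim_eq_of_isIntegral (A := A ⧸ p) (B := B ⧸ Q)
    (FaithfulSMul.algebraMap_injective _ _)]

end KrullDimension

section QuotientDim

variable {k : Type*} [Field k] {n : ℕ}

lemma ringKrullDim_eq_of_algebraicIndependent {B : Type*} [CommRing B] [Algebra k B] {e : ℕ}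
    {z : Fin e → B} (hz : AlgebraicIndependent k z) (hf : (aeval (R := k) z).toRingHom.Finite) :
    ringKrullDim B = e := by
  algebraize [(aeval (R := k) z).toRingHom]
  rw [← ringKrullDim_eq_of_isIntegral (A := MvPolynomial (Fin e) k) hz,
    ringKrullDim_mvPolynomial_fin]

lemma ringKrullDim_quotient_add_one_of_algebraicIndependent {B : Type*} [CommRing B] [IsDomain B]
    [IsNoetherianRing B] [Algebra k B] {e : ℕ} {z : Fin e → B} (hz : AlgebraicIndependent k z)
    (hfin : (aeval (R := k) z).toRingHom.Finite) {f : B} (hf : f ≠ 0) {Q : Ideal B}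
    (hQ : Q ∈ (Ideal.span {f}).minimalPrimes) : ringKrullDim (B ⧸ Q) + 1 = e := by
  algebraize [(aeval (R := k) z).toRingHom]
  rw [ringKrullDim_quotient_add_one_of_isIntegral (A := MvPolynomial (Fin e) k) ?_ hz hf hQ,
    ringKrullDim_mvPolynomial_fin]
  intro M hM
  rw [height_eq_of_isMaximal, ringKrullDim_mvPolynomial_fin]
  rfl

/-- The dimension of the affine variety defined by the ideal `P`, as a natural number; the junk
value for `P = ⊤` is `0`. -/
def quotientDim (P : Ideal (MvPolynomial (Fin n) k)) : ℕ :=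
  ((ringKrullDim (MvPolynomial (Fin n) k ⧸ P)).unbotD 0).toNat

lemma quotientDim_eq_of_ringKrullDim_eq {P : Ideal (MvPolynomial (Fin n) k)} {e : ℕ}
    (h : ringKrullDim (MvPolynomial (Fin n) k ⧸ P) = e) : quotientDim P = e := by
  rw [quotientDim, h]
  rfl

lemma quotientDim_bot : quotientDim (⊥ : Ideal (MvPolynomial (Fin n) k)) = n :=
  quotientDim_eq_of_ringKrullDim_eq <| by
    rw [ringKrullDim_eq_of_ringEquiv (RingEquiv.quotientBot _), ringKrullDim_mvPolynomial_fin]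

lemma quotientDim_eq_zero_of_isMaximal (M : Ideal (MvPolynomial (Fin n) k)) [M.IsMaximal] :
    quotientDim M = 0 :=
  let _ := Ideal.Quotient.field M
  quotientDim_eq_of_ringKrullDim_eq (ringKrullDim_eq_zero_of_field _)

variable [Infinite k]

lemma exists_isLinearNormalization_coord (P : Ideal (MvPolynomial (Fin n) k)) [P.IsPrime] :
    ∃ z : Fin (quotientDim P) → MvPolynomial (Fin n) k ⧸ P,
      IsLinearNormalization k (coord P) z := by
  obtain ⟨e, z, hz⟩ := exists_isLinearNormalization (k := k) (coord P)
  obtain rfl := quotientDim_eq_of_ringKrullDim_eq <| ringKrullDim_eq_of_algebraicIndependent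
    hz.algebraicIndependent (hz.finite (aeval_coord_surjective P))
  exact ⟨z, hz⟩

lemma ringKrullDim_quotient_eq (P : Ideal (MvPolynomial (Fin n) k)) [P.IsPrime] :
    ringKrullDim (MvPolynomial (Fin n) k ⧸ P) = quotientDim P := by
  obtain ⟨z, hz⟩ := exists_isLinearNormalization_coord P
  exact ringKrullDim_eq_of_algebraicIndependent hz.algebraicIndependent
    (hz.finite (aeval_coord_surjective P))

lemma quotientDim_add_one_of_mem_minimalPrimes {P Q : Ideal (MvPolynomial (Fin n) k)} [P.IsPrime]
    {f : MvPolynomial (Fin n) k} (hf : f ∉ P) (hQ : Q ∈ (P ⊔ Ideal.span {f}).minimalPrimes) :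
    quotientDim Q + 1 = quotientDim P := by
  have : Q.IsPrime := hQ.1.1
  obtain ⟨z, hz⟩ := exists_isLinearNormalization_coord P
  have hmap := Ideal.minimalPrimes_map_of_surjective (Ideal.Quotient.mk_surjective (I := P))
    (Ideal.span {f})
  rw [Ideal.mk_ker, sup_comm, Ideal.map_span, Set.image_singleton] at hmap
  have hdim := ringKrullDim_quotient_add_one_of_algebraicIndependent hz.algebraicIndependent
    (hz.finite (aeval_coord_surjective P)) (f := Ideal.Quotient.mk P f)
    (by rwa [Ne, Ideal.Quotient.eq_zero_iff_mem]) (hmap.ge (mem_image_of_mem _ hQ))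
  rw [ringKrullDim_eq_of_ringEquiv (DoubleQuot.quotQuotEquivQuotOfLE (le_sup_left.trans hQ.1.2)),
    ringKrullDim_quotient_eq] at hdim
  exact_mod_cast hdim

lemma quotientDim_lt {P Q : Ideal (MvPolynomial (Fin n) k)} [P.IsPrime] [Q.IsPrime] (h : P < Q) :
    quotientDim Q < quotientDim P := by
  obtain ⟨f, hf, hfP⟩ := SetLike.exists_of_lt h
  have hdim := ringKrullDim_succ_le_of_surjective (Ideal.Quotient.factor h.le)
    (Ideal.Quotient.factor_surjective h.le) (r := Ideal.Quotient.mk P f)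
    (mem_nonZeroDivisors_of_ne_zero (by rwa [Ne, Ideal.Quotient.eq_zero_iff_mem]))
    (by simpa [Ideal.Quotient.eq_zero_iff_mem] using hf)
  rw [ringKrullDim_quotient_eq, ringKrullDim_quotient_eq] at hdim
  exact_mod_cast hdim

lemma quotientDim_anti {P Q : Ideal (MvPolynomial (Fin n) k)} [P.IsPrime] [Q.IsPrime]
    (h : P ≤ Q) : quotientDim Q ≤ quotientDim P := by
  rcases h.eq_or_lt with rfl | h
  · exact le_rfl
  · exact (quotientDim_lt h).le

lemma quotientDim_le (P : Ideal (MvPolynomial (Fin n) k)) [P.IsPrime] : quotientDim P ≤ n :=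
  (quotientDim_anti bot_le).trans_eq quotientDim_bot

lemma eq_of_le_of_quotientDim_le {P Q : Ideal (MvPolynomial (Fin n) k)} [P.IsPrime] [Q.IsPrime]
    (h : P ≤ Q) (hdim : quotientDim P ≤ quotientDim Q) : P = Q :=
  h.eq_of_not_lt fun hlt => (quotientDim_lt hlt).not_ge hdim

lemma quotientDim_le_add_one_of_mem_minimalPrimes {P Q : Ideal (MvPolynomial (Fin n) k)}
    [hP : P.IsPrime] {f : MvPolynomial (Fin n) k} (hQ : Q ∈ (P ⊔ Ideal.span {f}).minimalPrimes) :
    quotientDim P ≤ quotientDim Q + 1 := by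
  by_cases hf : f ∈ P
  · rw [sup_eq_left.2 ((Ideal.span_singleton_le_iff_mem _).2 hf),
      Ideal.minimalPrimes_eq_subsingleton_self] at hQ
    rw [mem_singleton_iff.1 hQ]
    exact Nat.le_succ _
  · exact (quotientDim_add_one_of_mem_minimalPrimes hf hQ).ge

lemma exists_isPrime_between_of_list (l : List (MvPolynomial (Fin n) k))
    {P M : Ideal (MvPolynomial (Fin n) k)} [hP : P.IsPrime] [hM : M.IsPrime] (hPM : P ≤ M)
    (hl : ∀ f ∈ l, f ∈ M) :
    ∃ Q : Ideal (MvPolynomial (Fin n) k), Q.IsPrime ∧ P ≤ Q ∧ Q ≤ M ∧ (∀ f ∈ l, f ∈ Q) ∧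
      quotientDim P ≤ quotientDim Q + l.length := by
  induction l with
  | nil => exact ⟨P, hP, le_rfl, hPM, by simp, le_self_add⟩
  | cons f l ih =>
    obtain ⟨hfM, hlM⟩ := List.forall_mem_cons.1 hl
    obtain ⟨Q, hQ, hPQ, hQM, hlQ, hdim⟩ := ih hlM
    obtain ⟨Q', hQ', hQ'M⟩ := Ideal.exists_minimalPrimes_le (I := Q ⊔ Ideal.span {f}) (J := M)
      (sup_le hQM ((Ideal.span_singleton_le_iff_mem _).2 hfM))
    have hQQ' : Q ≤ Q' := le_sup_left.trans hQ'.1.2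
    have hfQ' : f ∈ Q' := hQ'.1.2 (Ideal.mem_sup_right (Ideal.mem_span_singleton_self _))
    refine ⟨Q', hQ'.1.1, hPQ.trans hQQ', hQ'M,
      List.forall_mem_cons.2 ⟨hfQ', fun g hg => hQQ' (hlQ g hg)⟩, hdim.trans ?_⟩
    have := quotientDim_le_add_one_of_mem_minimalPrimes hQ'
    rw [List.length_cons]
    omega

end QuotientDim

section Nullstellensatz

variable {n : ℕ} {V W : Set (Fin n → ℂ)} {S T : Set (MvPolynomial (Fin n) ℂ)}

lemma subset_zeroLocus_iff : V ⊆ zeroLocus n S ↔ S ⊆ vanishingIdeal n V :=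
  ⟨fun h f hf _ hx => h hx f hf, fun h x hx _ hf => h hf x hx⟩

lemma zeroLocus_anti (h : S ⊆ T) : zeroLocus n T ⊆ zeroLocus n S :=
  fun _ hx f hf => hx f (h hf)

lemma vanishingIdeal_anti (h : V ⊆ W) : vanishingIdeal n W ≤ vanishingIdeal n V :=
  fun _ hf x hx => hf x (h hx)

lemma IsAlgebraicSet.zeroLocus_vanishingIdeal (h : IsAlgebraicSet n V) :
    zeroLocus n (vanishingIdeal n V : Set (MvPolynomial (Fin n) ℂ)) = V := by
  obtain ⟨S, rfl⟩ := h
  exact (zeroLocus_anti (subset_zeroLocus_iff.1 subset_rfl)).antisymm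
    (subset_zeroLocus_iff.2 subset_rfl)

lemma IsAlgebraicSet.vanishingIdeal_le_iff (h : IsAlgebraicSet n W) :
    vanishingIdeal n W ≤ vanishingIdeal n V ↔ V ⊆ W := by
  refine ⟨fun hle => ?_, vanishingIdeal_anti⟩
  rw [← h.zeroLocus_vanishingIdeal]
  exact subset_zeroLocus_iff.2 hle

lemma IsIrredVariety.isPrime_vanishingIdeal (h : IsIrredVariety n V) :
    (vanishingIdeal n V).IsPrime := by
  obtain ⟨-, ⟨x, hx⟩, hunion⟩ := h
  refine ⟨(Ideal.ne_top_iff_one _).2 fun h1 => by simpa using h1 x hx, fun {f g} hfg => ?_⟩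
  have hcover : V ⊆ zeroLocus n {f} ∪ zeroLocus n {g} := by
    intro y hy
    have hy0 := hfg y hy
    rw [map_mul, mul_eq_zero] at hy0
    exact hy0.imp (by rintro h _ rfl; exact h) (by rintro h _ rfl; exact h)
  exact (hunion _ _ ⟨_, rfl⟩ ⟨_, rfl⟩ hcover).imp
    (fun h => subset_zeroLocus_iff.1 h (mem_singleton f))
    (fun h => subset_zeroLocus_iff.1 h (mem_singleton g))

lemma vanishingIdeal_zeroLocus (P : Ideal (MvPolynomial (Fin n) ℂ)) [P.IsPrime] :
    vanishingIdeal n (zeroLocus n (P : Set (MvPolynomial (Fin n) ℂ))) = P :=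
  IsPrime.vanishingIdeal_zeroLocus (K := ℂ) P

lemma isIrredVariety_zeroLocus (P : Ideal (MvPolynomial (Fin n) ℂ)) [hP : P.IsPrime] :
    IsIrredVariety n (zeroLocus n (P : Set (MvPolynomial (Fin n) ℂ))) := by
  refine ⟨⟨_, rfl⟩, nonempty_iff_ne_empty.2 fun h => hP.ne_top ?_, ?_⟩
  · rw [← vanishingIdeal_zeroLocus P, h, eq_top_iff]
    exact fun f _ x hx => hx.elim
  · rintro _ _ ⟨S, rfl⟩ ⟨T, rfl⟩ hST
    by_contra! hc
    rw [subset_zeroLocus_iff, subset_zeroLocus_iff, vanishingIdeal_zeroLocus, not_subset,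
      not_subset] at hc
    obtain ⟨⟨f, hf, hfP⟩, g, hg, hgP⟩ := hc
    have hfg : f * g ∈ P := by
      rw [← vanishingIdeal_zeroLocus P]
      intro x hx
      rcases hST hx with h | h
      · rw [map_mul, h f hf, zero_mul]
      · rw [map_mul, h g hg, mul_zero]
    exact (hP.mem_or_mem hfg).elim hfP hgP

lemma IsIrredVariety.le_quotientDim_of_hasChain (hV : IsIrredVariety n V) {d : ℕ}
    (h : HasChain n V d) : d ≤ quotientDim (vanishingIdeal n V) := by
  obtain ⟨W, hW, hlt, hWV⟩ := h
  have (i : Fin (d + 1)) := (hW i).isPrime_vanishingIdeal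
  have := hV.isPrime_vanishingIdeal
  have hmono : StrictMono fun i => quotientDim (vanishingIdeal n (W i)) := fun i j hij =>
    quotientDim_lt <| (vanishingIdeal_anti (hlt i j hij).subset).lt_of_not_ge fun hle =>
      (hlt i j hij).not_subset (((hW i).1.vanishingIdeal_le_iff).1 hle)
  have hcard := Finset.card_le_card_of_injOn (s := Finset.univ)
    (t := Finset.range (quotientDim (vanishingIdeal n V) + 1)) _
    (fun i _ => Finset.mem_coe.2 <| Finset.mem_range.2 <| Nat.lt_succ_of_le <|
      (hmono.monotone (Fin.le_last i)).trans (quotientDim_anti (vanishingIdeal_anti hWV)))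
    hmono.injective.injOn
  rw [Finset.card_univ, Fintype.card_fin, Finset.card_range] at hcard
  omega

lemma IsIrredVariety.hasChain_quotientDim (hV : IsIrredVariety n V) :
    HasChain n V (quotientDim (vanishingIdeal n V)) := by
  have := hV.isPrime_vanishingIdeal
  obtain ⟨l, hl⟩ := Order.le_krullDim_iff.1 (ringKrullDim_quotient_eq (vanishingIdeal n V)).ge
  rw [← hl]
  let Q (i : Fin (l.length + 1)) : Ideal (MvPolynomial (Fin n) ℂ) :=
    (l i.rev).asIdeal.comap (Ideal.Quotient.mk (vanishingIdeal n V))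
  have (i : Fin (l.length + 1)) : (Q i).IsPrime := Ideal.IsPrime.comap _
  refine ⟨fun i => zeroLocus n (Q i : Set (MvPolynomial (Fin n) ℂ)),
    fun i => isIrredVariety_zeroLocus _, fun i j hij => ?_, ?_⟩
  · have hQ : Q j < Q i :=
      (Ideal.orderEmbeddingOfSurjective _ Ideal.Quotient.mk_surjective).strictMono
        (l.strictMono (Fin.rev_lt_rev.2 hij))
    refine (zeroLocus_anti hQ.le).ssubset_of_ne fun h => hQ.ne ?_
    rw [← vanishingIdeal_zeroLocus (Q j), ← h, vanishingIdeal_zeroLocus]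
  · refine (zeroLocus_anti fun f hf => ?_).trans_eq hV.1.zeroLocus_vanishingIdeal
    rw [SetLike.mem_coe, Ideal.mem_comap, Ideal.Quotient.eq_zero_iff_mem.2 hf]
    exact zero_mem _

lemma IsIrredVariety.dim_eq (hV : IsIrredVariety n V) :
    dim n V = quotientDim (vanishingIdeal n V) :=
  IsGreatest.csSup_eq ⟨hV.hasChain_quotientDim, fun _ => hV.le_quotientDim_of_hasChain⟩

lemma dim_zeroLocus (P : Ideal (MvPolynomial (Fin n) ℂ)) [P.IsPrime] :
    dim n (zeroLocus n (P : Set (MvPolynomial (Fin n) ℂ))) = quotientDim P := by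
  rw [(isIrredVariety_zeroLocus P).dim_eq, vanishingIdeal_zeroLocus]

lemma IsIrredVariety.dim_le (hV : IsIrredVariety n V) : dim n V ≤ n := by
  have := hV.isPrime_vanishingIdeal
  exact hV.dim_eq.trans_le (quotientDim_le _)

lemma isIrredComponent_zeroLocus_of_mem_minimalPrimes {Q : Ideal (MvPolynomial (Fin n) ℂ)}
    (hQ : Q ∈ (Ideal.span S).minimalPrimes) :
    IsIrredComponent n (zeroLocus n (Q : Set (MvPolynomial (Fin n) ℂ))) (zeroLocus n S) := by
  have := hQ.1.1
  refine ⟨isIrredVariety_zeroLocus Q, zeroLocus_anti (Ideal.span_le.1 hQ.1.2),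
    fun W hW hQW hWS => Subset.antisymm (subset_zeroLocus_iff.2 ?_) hQW⟩
  have hle := vanishingIdeal_anti hQW
  rw [vanishingIdeal_zeroLocus] at hle
  exact hQ.2 ⟨hW.isPrime_vanishingIdeal, Ideal.span_le.2 (subset_zeroLocus_iff.1 hWS)⟩ hle

lemma IsIrredComponent.vanishingIdeal_mem_minimalPrimes (h : IsIrredComponent n W (zeroLocus n S)) :
    vanishingIdeal n W ∈ (Ideal.span S).minimalPrimes := by
  obtain ⟨hW, hWS, hmax⟩ := h
  refine ⟨⟨hW.isPrime_vanishingIdeal, Ideal.span_le.2 (subset_zeroLocus_iff.1 hWS)⟩, ?_⟩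
  rintro Q ⟨hQ, hSQ⟩ hle
  rw [← hmax _ (isIrredVariety_zeroLocus Q) (subset_zeroLocus_iff.2 hle)
    (zeroLocus_anti (Ideal.span_le.1 hSQ)), vanishingIdeal_zeroLocus]

lemma IsIrredVariety.isIrredComponent_iff {X : Set (Fin n → ℂ)} (hX : IsIrredVariety n X) :
    IsIrredComponent n W X ↔ W = X :=
  ⟨fun ⟨_, hWX, hmax⟩ => (hmax X hX hWX subset_rfl).symm,
    by rintro rfl; exact ⟨hX, subset_rfl, fun _ _ h h' => h'.antisymm h⟩⟩

lemma IsIrredVariety.degreeSum_eq {X : Set (Fin n → ℂ)} (hX : IsIrredVariety n X) :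
    degreeSum n X = degree n X := by
  simp only [degreeSum, hX.isIrredComponent_iff]
  exact finsum_mem_singleton

end Nullstellensatz

section DimAlong

variable {k : Type*} [Field k] [Infinite k] {n : ℕ} {J J' P Q : Ideal (MvPolynomial (Fin n) k)}

/-- The largest dimension of an irreducible closed subset of the zero locus of `J` that contains
the zero locus of the prime `P`; equivalently, of a component of the zero locus of `J` containing
that of `P`. -/
def dimAlong (J P : Ideal (MvPolynomial (Fin n) k)) : ℕ :=
  sSup {e | ∃ Q : Ideal (MvPolynomial (Fin n) k), Q.IsPrime ∧ J ≤ Q ∧ Q ≤ P ∧ quotientDim Q = e}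

lemma quotientDim_le_dimAlong [hQ : Q.IsPrime] (hJQ : J ≤ Q) (hQP : Q ≤ P) :
    quotientDim Q ≤ dimAlong J P :=
  le_csSup ⟨n, by rintro _ ⟨Q, hQ, -, -, rfl⟩; exact quotientDim_le Q⟩ ⟨Q, hQ, hJQ, hQP, rfl⟩

lemma exists_mem_minimalPrimes_quotientDim_eq [P.IsPrime] (hJP : J ≤ P) :
    ∃ Q ∈ J.minimalPrimes, Q ≤ P ∧ quotientDim Q = dimAlong J P := by
  obtain ⟨Q, hQ, hJQ, hQP, hdim⟩ := Nat.sSup_mem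
    (s := {e | ∃ Q : Ideal (MvPolynomial (Fin n) k),
      Q.IsPrime ∧ J ≤ Q ∧ Q ≤ P ∧ quotientDim Q = e})
    ⟨_, P, ‹_›, hJP, le_rfl, rfl⟩ ⟨n, by rintro _ ⟨Q, hQ, -, -, rfl⟩; exact quotientDim_le Q⟩
  obtain ⟨Q', hQ', hQ'Q⟩ := Ideal.exists_minimalPrimes_le hJQ
  have := hQ'.1.1
  exact ⟨Q', hQ', hQ'Q.trans hQP, (quotientDim_le_dimAlong hQ'.1.2 (hQ'Q.trans hQP)).antisymm
    (hdim.ge.trans (quotientDim_anti hQ'Q))⟩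

lemma dimAlong_le [P.IsPrime] (hJP : J ≤ P) : dimAlong J P ≤ n := by
  obtain ⟨Q, hQ, -, hdim⟩ := exists_mem_minimalPrimes_quotientDim_eq hJP
  have := hQ.1.1
  exact hdim.symm.trans_le (quotientDim_le Q)

lemma dimAlong_anti [P.IsPrime] (hJ : J ≤ J') (hJP : J' ≤ P) : dimAlong J' P ≤ dimAlong J P := by
  obtain ⟨Q, hQ, hQP, hdim⟩ := exists_mem_minimalPrimes_quotientDim_eq hJP
  have := hQ.1.1
  exact hdim.symm.trans_le (quotientDim_le_dimAlong (hJ.trans hQ.1.2) hQP)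

lemma dimAlong_self [P.IsPrime] : dimAlong P P = quotientDim P := by
  obtain ⟨Q, hQ, hQP, hdim⟩ := exists_mem_minimalPrimes_quotientDim_eq (le_refl P)
  rw [← hdim, hQP.antisymm hQ.1.2]

lemma dimAlong_bot [P.IsPrime] : dimAlong ⊥ P = n :=
  (dimAlong_le bot_le).antisymm
    (quotientDim_bot.symm.trans_le (quotientDim_le_dimAlong le_rfl bot_le))

lemma dimAlong_le_dimAlong_sup_span_add_one [P.IsPrime] (hJP : J ≤ P) {f : MvPolynomial (Fin n) k}
    (hf : f ∈ P) : dimAlong J P ≤ dimAlong (J ⊔ Ideal.span {f}) P + 1 := by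
  obtain ⟨Q, hQ, hQP, hdim⟩ := exists_mem_minimalPrimes_quotientDim_eq hJP
  have := hQ.1.1
  obtain ⟨Q', hQ', hQ'P⟩ := Ideal.exists_minimalPrimes_le (I := Q ⊔ Ideal.span {f}) (J := P)
    (sup_le hQP ((Ideal.span_singleton_le_iff_mem _).2 hf))
  have := hQ'.1.1
  rw [← hdim]
  exact (quotientDim_le_add_one_of_mem_minimalPrimes hQ').trans (Nat.succ_le_succ
    (quotientDim_le_dimAlong ((sup_le_sup_right hQ.1.2 _).trans hQ'.1.2) hQ'P))

lemma exists_subset_dimAlong_span_eq [P.IsPrime] {e : ℕ} (he : e ≤ n)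
    (T : Finset (MvPolynomial (Fin n) k)) (hT : Ideal.span (T : Set (MvPolynomial (Fin n) k)) ≤ P)
    (hle : dimAlong (Ideal.span (T : Set (MvPolynomial (Fin n) k))) P ≤ e) :
    ∃ T' ⊆ T, dimAlong (Ideal.span (T' : Set (MvPolynomial (Fin n) k))) P = e := by
  classical
  induction T using Finset.induction_on with
  | empty =>
    refine ⟨∅, subset_rfl, hle.antisymm (he.trans_eq ?_)⟩
    rw [Finset.coe_empty, Ideal.span_empty, dimAlong_bot]
  | insert f T _ ih =>
    have hspan : Ideal.span (↑(insert f T) : Set (MvPolynomial (Fin n) k)) =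
        Ideal.span (T : Set (MvPolynomial (Fin n) k)) ⊔ Ideal.span {f} := by
      rw [Finset.coe_insert, Ideal.span_insert, sup_comm]
    rw [hspan] at hT hle
    obtain ⟨hTP, hfP⟩ := sup_le_iff.1 hT
    rcases le_or_gt (dimAlong (Ideal.span (T : Set (MvPolynomial (Fin n) k))) P) e with h | h
    · obtain ⟨T', hT', heq⟩ := ih hTP h
      exact ⟨T', hT'.trans (Finset.subset_insert _ _), heq⟩
    · have := dimAlong_le_dimAlong_sup_span_add_one hTP
        ((Ideal.span_singleton_le_iff_mem _).1 hfP)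
      refine ⟨insert f T, subset_rfl, ?_⟩
      rw [hspan]
      omega

end DimAlong

section TruncIdeal

variable {k : Type*} [Field k] {n : ℕ}

/-- The ideal generated by the elements of `P` of degree at most `m`. -/
def truncIdeal (P : Ideal (MvPolynomial (Fin n) k)) (m : ℕ) : Ideal (MvPolynomial (Fin n) k) :=
  Ideal.span {f | f ∈ P ∧ f.totalDegree ≤ m}

lemma truncIdeal_le (P : Ideal (MvPolynomial (Fin n) k)) (m : ℕ) : truncIdeal P m ≤ P :=
  Ideal.span_le.2 fun _ hf => hf.1

lemma exists_finset_span_eq_truncIdeal (P : Ideal (MvPolynomial (Fin n) k)) (m : ℕ) :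
    ∃ T : Finset (MvPolynomial (Fin n) k), (∀ f ∈ T, f ∈ P ∧ f.totalDegree ≤ m) ∧
      Ideal.span (T : Set (MvPolynomial (Fin n) k)) = truncIdeal P m := by
  obtain ⟨T, hT, hspan⟩ := Submodule.fg_span_iff_fg_span_finset_subset
    {f | f ∈ P ∧ f.totalDegree ≤ m} |>.1 (IsNoetherian.noetherian (truncIdeal P m))
  exact ⟨T, fun f hf => hT hf, hspan.symm⟩

lemma exists_truncIdeal_eq (P : Ideal (MvPolynomial (Fin n) k)) : ∃ m, truncIdeal P m = P := by
  obtain ⟨T, hT⟩ := (isNoetherianRing_iff_ideal_fg _).1 inferInstance P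
  refine ⟨T.sup totalDegree, (truncIdeal_le P _).antisymm ?_⟩
  nth_rw 1 [← hT]
  exact Ideal.span_mono fun f hf =>
    ⟨hT.le (Ideal.subset_span hf), Finset.le_sup (f := totalDegree) hf⟩

end TruncIdeal

section PartialDeg

variable {n : ℕ} {V : Set (Fin n → ℂ)} {m i s : ℕ}

lemma IsIrredVariety.maxCompDimEq_iff (hV : IsIrredVariety n V)
    {S : Set (MvPolynomial (Fin n) ℂ)} (hVS : V ⊆ zeroLocus n S) {e : ℕ} :
    MaxCompDimEq n (zeroLocus n S) V e ↔
      dimAlong (Ideal.span S) (vanishingIdeal n V) = e := by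
  have := hV.isPrime_vanishingIdeal
  have hmax : MaxCompDimEq n (zeroLocus n S) V
      (dimAlong (Ideal.span S) (vanishingIdeal n V)) := by
    constructor
    · obtain ⟨Q, hQ, hQP, hdim⟩ := exists_mem_minimalPrimes_quotientDim_eq
        (Ideal.span_le.2 (subset_zeroLocus_iff.1 hVS))
      have := hQ.1.1
      exact ⟨_, isIrredComponent_zeroLocus_of_mem_minimalPrimes hQ, subset_zeroLocus_iff.2 hQP,
        (dim_zeroLocus Q).trans hdim⟩
    · intro W hW hVW
      have hQ := hW.vanishingIdeal_mem_minimalPrimes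
      have := hQ.1.1
      rw [hW.1.dim_eq]
      exact quotientDim_le_dimAlong hQ.1.2 (vanishingIdeal_anti hVW)
  refine ⟨fun h => ?_, fun h => h ▸ hmax⟩
  obtain ⟨⟨W, hW, hVW, rfl⟩, hle⟩ := h
  obtain ⟨⟨W', hW', hVW', heq⟩, hle'⟩ := hmax
  exact (heq.symm.trans_le (hle W' hW' hVW')).antisymm (hle' W hW hVW)

lemma IsIrredVariety.exists_finset_maxCompDimEq (hV : IsIrredVariety n V)
    (h : dimAlong (truncIdeal (vanishingIdeal n V) m) (vanishingIdeal n V) ≤ n - i) :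
    ∃ T : Finset (MvPolynomial (Fin n) ℂ), (∀ f ∈ T, f.totalDegree ≤ m) ∧
      V ⊆ zeroLocus n ↑T ∧ MaxCompDimEq n (zeroLocus n ↑T) V (n - i) := by
  have := hV.isPrime_vanishingIdeal
  obtain ⟨T, hT, hspan⟩ := exists_finset_span_eq_truncIdeal (vanishingIdeal n V) m
  obtain ⟨T', hT'T, hdim⟩ := exists_subset_dimAlong_span_eq (Nat.sub_le n i) T
    (hspan.trans_le (truncIdeal_le _ m)) (hspan.symm ▸ h)
  have hVT' : V ⊆ zeroLocus n ↑T' := subset_zeroLocus_iff.2 fun f hf => (hT f (hT'T hf)).1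
  exact ⟨T', fun f hf => (hT f (hT'T hf)).2, hVT', (hV.maxCompDimEq_iff hVT').2 hdim⟩

lemma IsIrredVariety.partialDeg_le_iff (hV : IsIrredVariety n V) (hi : i ≤ n - dim n V) :
    partialDeg n V i ≤ m ↔
      dimAlong (truncIdeal (vanishingIdeal n V) m) (vanishingIdeal n V) ≤ n - i := by
  have := hV.isPrime_vanishingIdeal
  rcases eq_or_ne i 0 with rfl | hi0
  · exact iff_of_true (by simp [partialDeg]) (dimAlong_le (truncIdeal_le _ m))
  rw [partialDeg, if_neg hi0]
  refine ⟨fun hle => ?_, fun h => Nat.sInf_le (hV.exists_finset_maxCompDimEq h)⟩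
  obtain ⟨m₀, hm₀⟩ := exists_truncIdeal_eq (vanishingIdeal n V)
  have hdim := hV.dim_le
  have hm₀i : dimAlong (truncIdeal (vanishingIdeal n V) m₀) (vanishingIdeal n V) ≤ n - i := by
    rw [hm₀, dimAlong_self, ← hV.dim_eq]
    omega
  obtain ⟨T, hTdeg, hVT, hmax⟩ :=
    Nat.sInf_mem (s := {δ | ∃ T : Finset (MvPolynomial (Fin n) ℂ), (∀ f ∈ T, f.totalDegree ≤ δ) ∧
      V ⊆ zeroLocus n ↑T ∧ MaxCompDimEq n (zeroLocus n ↑T) V (n - i)})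
      ⟨m₀, hV.exists_finset_maxCompDimEq hm₀i⟩
  rw [hV.maxCompDimEq_iff hVT] at hmax
  rw [← hmax]
  exact dimAlong_anti (Ideal.span_mono fun f hf =>
    ⟨subset_zeroLocus_iff.1 hVT hf, (hTdeg f hf).trans hle⟩) (truncIdeal_le _ m)

lemma IsIrredVariety.dimAlong_truncIdeal_eq (hV : IsIrredVariety n V) (hs : s ≤ n - dim n V)
    (hle : partialDeg n V s ≤ m) (hlt : (m : ℕ∞) < partialDegE n V (s + 1)) :
    dimAlong (truncIdeal (vanishingIdeal n V) m) (vanishingIdeal n V) = n - s := by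
  have := hV.isPrime_vanishingIdeal
  refine ((hV.partialDeg_le_iff hs).1 hle).antisymm ?_
  by_cases h : s + 1 ≤ n - dim n V
  · rw [partialDegE, if_pos h, Nat.cast_lt, ← not_le, hV.partialDeg_le_iff h] at hlt
    omega
  · have hdim := quotientDim_le_dimAlong (truncIdeal_le (vanishingIdeal n V) m) le_rfl
    rw [← hV.dim_eq] at hdim
    omega

end PartialDeg

section HilbertFunction

variable (k : Type*) [Field k]

lemma finrank_restrictTotalDegree (e m : ℕ) :
    Module.finrank k (restrictTotalDegree (Fin e) k m) = (m + e).choose e := by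
  have hsum (d : Fin e →₀ ℕ) : (d.sum fun _ r => r) = ∑ i, d i :=
    Finsupp.sum_fintype _ _ fun _ => rfl
  -- Homogenising exponents: the new zeroth entry is the missing degree.
  let homogenise : {d : Fin e →₀ ℕ | (d.sum fun _ r => r) ≤ m} ≃
      (Finset.univ : Finset (Fin (e + 1))).finsuppAntidiag m :=
    { toFun d := ⟨Finsupp.cons (m - ∑ i, d.1 i) d.1, by
        have hd := d.2
        rw [Set.mem_ofPred_eq, hsum] at hd
        simp only [Finset.mem_finsuppAntidiag, Fin.sum_univ_succ, Finsupp.cons_zero,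
          Finsupp.cons_succ, Finset.subset_univ, and_true]
        omega⟩
      invFun c := ⟨Finsupp.tail c.1, by
        have hc := c.2
        rw [Finset.mem_finsuppAntidiag, Fin.sum_univ_succ] at hc
        simp only [Set.mem_ofPred_eq, hsum, Finsupp.tail_apply]
        omega⟩
      left_inv d := by simp
      right_inv c := by
        have hc := c.2
        rw [Finset.mem_finsuppAntidiag, Fin.sum_univ_succ] at hc
        have hc0 : m - ∑ i : Fin e, c.1 i.succ = c.1 0 := by omega
        simp only [Finsupp.tail_apply, hc0, Finsupp.cons_tail] }
  rw [restrictTotalDegree, Module.finrank_eq_nat_card_basis (basisRestrictSupport k _),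
    Nat.card_congr homogenise, Nat.card_eq_fintype_card, Fintype.card_coe,
    Finset.card_finsuppAntidiag_nat_eq_choose, Finset.card_univ, Fintype.card_fin,
    Nat.add_right_comm, Nat.add_sub_cancel, add_comm e m, Nat.choose_symm_add]

variable {k} {n : ℕ} {P Q : Ideal (MvPolynomial (Fin n) k)}

/-- The affine Hilbert function of an ideal: `hilbert n V` is the one of the ideal of `V`. -/
def hilbertFunction (P : Ideal (MvPolynomial (Fin n) k)) (m : ℕ) : ℕ :=
  Module.finrank k
    ((restrictTotalDegree (Fin n) k m).map (Ideal.Quotient.mkₐ k P).toLinearMap)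

lemma restrictTotalDegree_mono {ι : Type*} :
    Monotone (restrictTotalDegree ι k) := fun m m' h f hf => by
  rw [mem_restrictTotalDegree] at *
  exact hf.trans h

lemma hilbertFunction_mono (P : Ideal (MvPolynomial (Fin n) k)) : Monotone (hilbertFunction P) :=
  fun _ _ h => Submodule.finrank_mono (Submodule.map_mono (restrictTotalDegree_mono h))

lemma map_mk_map_factor (h : P ≤ Q) (S : Submodule k (MvPolynomial (Fin n) k)) :
    (S.map (Ideal.Quotient.mkₐ k P).toLinearMap).map (Ideal.Quotient.factorₐ k h).toLinearMap =
      S.map (Ideal.Quotient.mkₐ k Q).toLinearMap :=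
  (Submodule.map_comp _ _ _).symm

lemma hilbertFunction_anti (h : P ≤ Q) (m : ℕ) : hilbertFunction Q m ≤ hilbertFunction P m := by
  rw [hilbertFunction, ← map_mk_map_factor h]
  exact Submodule.finrank_map_le _ _

lemma hilbertFunction_le_of_forall_totalDegree_le {m : ℕ}
    (h : ∀ f ∈ Q, f.totalDegree ≤ m → f ∈ P) : hilbertFunction P m ≤ hilbertFunction Q m := by
  have hker : LinearMap.ker ((Ideal.Quotient.mkₐ k Q).toLinearMap.domRestrict
      (restrictTotalDegree (Fin n) k m)) ≤ LinearMap.ker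
      ((Ideal.Quotient.mkₐ k P).toLinearMap.domRestrict (restrictTotalDegree (Fin n) k m)) :=
    fun f hf => Ideal.Quotient.eq_zero_iff_mem.2 <|
      h f (Ideal.Quotient.eq_zero_iff_mem.1 hf) ((mem_restrictTotalDegree _ _ _).1 f.2)
  have hP := LinearMap.finrank_range_add_finrank_ker
    ((Ideal.Quotient.mkₐ k P).toLinearMap.domRestrict (restrictTotalDegree (Fin n) k m))
  have hQ := LinearMap.finrank_range_add_finrank_ker
    ((Ideal.Quotient.mkₐ k Q).toLinearMap.domRestrict (restrictTotalDegree (Fin n) k m))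
  have := Submodule.finrank_mono hker
  rw [LinearMap.range_domRestrict] at hP hQ
  rw [hilbertFunction, hilbertFunction]
  omega

lemma hilbertFunction_add_hilbertFunction_le [P.IsPrime] (h : P ≤ Q) {f : MvPolynomial (Fin n) k}
    (hfP : f ∉ P) (hfQ : f ∈ Q) (m : ℕ) :
    hilbertFunction P m + hilbertFunction Q (m + f.totalDegree) ≤
      hilbertFunction P (m + f.totalDegree) := by
  let T (r : ℕ) := (restrictTotalDegree (Fin n) k r).map (Ideal.Quotient.mkₐ k P).toLinearMap
  let π := (Ideal.Quotient.factorₐ k h).toLinearMap.domRestrict (T (m + f.totalDegree))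
  have hrange : Module.finrank k (LinearMap.range π) = hilbertFunction Q (m + f.totalDegree) := by
    rw [LinearMap.range_domRestrict, map_mk_map_factor, hilbertFunction]
  let μ := LinearMap.mulLeft k (Ideal.Quotient.mk P f)
  have hμ : Function.Injective μ := mul_right_injective₀
    (mt Ideal.Quotient.eq_zero_iff_mem.1 hfP)
  have hμT : (T m).map μ ≤ (LinearMap.ker π).map (T (m + f.totalDegree)).subtype := by
    rintro _ ⟨_, ⟨g, hg, rfl⟩, rfl⟩
    refine ⟨⟨μ (Ideal.Quotient.mk P g), f * g, ?_, map_mul (Ideal.Quotient.mk P) f g⟩, ?_, rfl⟩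
    · rw [SetLike.mem_coe, mem_restrictTotalDegree] at *
      exact (totalDegree_mul f g).trans (by omega)
    · exact Ideal.Quotient.eq_zero_iff_mem.2 (Q.mul_mem_right g hfQ)
  have hker : hilbertFunction P m ≤ Module.finrank k (LinearMap.ker π) :=
    calc hilbertFunction P m = Module.finrank k ((T m).map μ) :=
          (Submodule.equivMapOfInjective μ hμ (T m)).finrank_eq
      _ ≤ Module.finrank k ((LinearMap.ker π).map (T (m + f.totalDegree)).subtype) :=
          Submodule.finrank_mono hμT
      _ ≤ Module.finrank k (LinearMap.ker π) := Submodule.finrank_map_le _ _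
  have hdim : _ = hilbertFunction P _ := LinearMap.finrank_range_add_finrank_ker π
  omega

lemma sum_range_hilbertFunction_le [P.IsPrime] (h : P ≤ Q) {f : MvPolynomial (Fin n) k}
    (hfP : f ∉ P) (hfQ : f ∈ Q) (hf : 0 < f.totalDegree) (m : ℕ) :
    ∑ j ∈ Finset.range (m + 1), hilbertFunction Q j ≤ f.totalDegree * hilbertFunction P m := by
  induction m using Nat.strong_induction_on with
  | _ m ih =>
    rcases lt_or_ge m f.totalDegree with hm | hm
    · calc ∑ j ∈ Finset.range (m + 1), hilbertFunction Q j
          ≤ (Finset.range (m + 1)).card • hilbertFunction P m :=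
            Finset.sum_le_card_nsmul _ _ _ fun j hj => (hilbertFunction_anti h j).trans
              (hilbertFunction_mono P (Nat.lt_succ_iff.1 (Finset.mem_range.1 hj)))
        _ = (m + 1) * hilbertFunction P m := by rw [Finset.card_range, smul_eq_mul]
        _ ≤ f.totalDegree * hilbertFunction P m := Nat.mul_le_mul_right _ hm
    · obtain ⟨r, rfl⟩ := Nat.exists_eq_add_of_le' hm
      have hlast : ∑ j ∈ Finset.range f.totalDegree, hilbertFunction Q (r + 1 + j) ≤
          (Finset.range f.totalDegree).card • hilbertFunction Q (r + f.totalDegree) :=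
        Finset.sum_le_card_nsmul _ _ _ fun j hj =>
          hilbertFunction_mono Q (by have := Finset.mem_range.1 hj; omega)
      rw [Finset.card_range, smul_eq_mul] at hlast
      calc ∑ j ∈ Finset.range (r + f.totalDegree + 1), hilbertFunction Q j
          = ∑ j ∈ Finset.range (r + 1), hilbertFunction Q j +
              ∑ j ∈ Finset.range f.totalDegree, hilbertFunction Q (r + 1 + j) := by
            rw [Nat.add_right_comm, Finset.sum_range_add]
        _ ≤ f.totalDegree * hilbertFunction P r +
              f.totalDegree * hilbertFunction Q (r + f.totalDegree) :=
            add_le_add (ih r (by omega)) hlast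
        _ = f.totalDegree * (hilbertFunction P r + hilbertFunction Q (r + f.totalDegree)) :=
            (mul_add _ _ _).symm
        _ ≤ f.totalDegree * hilbertFunction P (r + f.totalDegree) :=
            Nat.mul_le_mul_left _ (hilbertFunction_add_hilbertFunction_le h hfP hfQ r)

lemma mul_choose_succ_le_mul_hilbertFunction [P.IsPrime] (h : P ≤ Q) {f : MvPolynomial (Fin n) k}
    (hfP : f ∉ P) (hfQ : f ∈ Q) (hf : 0 < f.totalDegree) {N K e : ℕ}
    (hN : ∀ m, N * (m + e).choose e ≤ hilbertFunction Q (m + K)) (m : ℕ) :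
    N * (m + (e + 1)).choose (e + 1) ≤ f.totalDegree * hilbertFunction P (m + K) := by
  calc N * (m + (e + 1)).choose (e + 1)
      = ∑ j ∈ Finset.range (m + 1), N * (j + e).choose e := by
        rw [← Finset.mul_sum, Nat.sum_range_add_choose, add_assoc]
    _ ≤ ∑ j ∈ Finset.range (m + 1), hilbertFunction Q (K + j) :=
        Finset.sum_le_sum fun j _ => (hN j).trans_eq (by rw [add_comm])
    _ ≤ ∑ j ∈ Finset.range (m + K + 1), hilbertFunction Q j := by
        rw [show m + K + 1 = K + (m + 1) by ring, Finset.sum_range_add _ K (m + 1)]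
        exact Nat.le_add_left _ _
    _ ≤ f.totalDegree * hilbertFunction P (m + K) :=
        sum_range_hilbertFunction_le h hfP hfQ hf _

end HilbertFunction

section PolynomialFamily

variable {k ι : Type*} [Field k]

lemma exists_eq_X_pow_mul {φ : ι → Polynomial k} {i₀ : ι} (h : φ i₀ ≠ 0) :
    ∃ (a : ℕ) (ψ : ι → Polynomial k) (i : ι),
      (∀ i, φ i = Polynomial.X ^ a * ψ i) ∧ (ψ i).coeff 0 ≠ 0 := by
  classical
  have hex : ∃ a i, (φ i).coeff a ≠ 0 := by
    by_contra! hc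
    exact h (Polynomial.ext fun a => hc a i₀)
  have hdvd (i : ι) : Polynomial.X ^ Nat.find hex ∣ φ i :=
    Polynomial.X_pow_dvd_iff.2 fun b hb => not_not.1 (not_exists.1 (Nat.find_min hex hb) i)
  choose ψ hψ using hdvd
  obtain ⟨i, hi⟩ := Nat.find_spec hex
  rw [hψ i, Polynomial.coeff_X_pow_mul', if_pos le_rfl, Nat.sub_self] at hi
  exact ⟨_, ψ, i, hψ, hi⟩

lemma exists_eval_eq {n : ℕ} [Finite ι] {p : ι → Fin n → k} (hp : Function.Injective p)
    (c : ι → k) : ∃ g : MvPolynomial (Fin n) k, ∀ i, eval (p i) g = c i := by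
  have hmax (i : ι) : (RingHom.ker (eval (p i))).IsMaximal :=
    RingHom.ker_isMaximal_of_surjective _ fun a => ⟨C a, eval_C a⟩
  have hcop : Pairwise (Function.onFun IsCoprime fun i => RingHom.ker (eval (p i))) := by
    intro i j hij
    refine Ideal.isCoprime_of_isMaximal fun h => hij (hp (funext fun r => ?_))
    have hr : X r - C (p i r) ∈ RingHom.ker (eval (p i)) := by simp
    rw [show RingHom.ker (eval (p i)) = RingHom.ker (eval (p j)) from h] at hr
    simpa [sub_eq_zero, eq_comm] using hr
  obtain ⟨g, hg⟩ := Ideal.exists_forall_sub_mem_ideal hcop fun i => C (c i)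
  exact ⟨g, fun i => by simpa [sub_eq_zero] using hg i⟩

end PolynomialFamily

section SeparatedPoints

variable {k ι : Type*} [Field k] {n d : ℕ} {P : Ideal (MvPolynomial (Fin n) k)}
  {l : Fin d → MvPolynomial (Fin n) k}

lemma exists_curve_through_point [Infinite k] [P.IsPrime] (hP : quotientDim P = d)
    (hl : ∀ Q : Ideal (MvPolynomial (Fin n) k), Q.IsPrime → P ≤ Q → (∀ j, l j ∈ Q) →
      quotientDim Q = 0)
    {x : Fin n → k} (hPx : P ≤ RingHom.ker (eval x)) (hlx : ∀ j, eval x (l j) = 0)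
    {v : Fin d → k} (hv : v ≠ 0) :
    ∃ (Q : Ideal (MvPolynomial (Fin n) k)) (t : MvPolynomial (Fin n) k), Q.IsPrime ∧ P ≤ Q ∧
      Q ≤ RingHom.ker (eval x) ∧ eval x t = 0 ∧ t ∉ Q ∧ ∀ j, l j - C (v j) * t ∈ Q := by
  obtain ⟨j₀, hj₀⟩ := Function.ne_iff.1 hv
  let t : MvPolynomial (Fin n) k := C (v j₀)⁻¹ * l j₀
  have htx : eval x t = 0 := by rw [map_mul, hlx, mul_zero]
  have := RingHom.ker_isPrime (eval x)
  obtain ⟨Q, hQ, hPQ, hQx, hlQ, hdim⟩ := exists_isPrime_between_of_list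
    ((Finset.univ.erase j₀).toList.map fun j => l j - C (v j) * t) hPx (by
      rintro _ hf
      obtain ⟨j, -, rfl⟩ := List.mem_map.1 hf
      rw [RingHom.mem_ker, map_sub, map_mul, hlx, htx, mul_zero, sub_zero])
  have hmem (j : Fin d) : l j - C (v j) * t ∈ Q := by
    rcases eq_or_ne j j₀ with rfl | hj
    · have : l j - C (v j) * t = 0 := by
        rw [← mul_assoc, ← C_mul, mul_inv_cancel₀ hj₀, C_1, one_mul, sub_self]
      exact this ▸ zero_mem Q
    · exact hlQ _ (List.mem_map_of_mem (Finset.mem_toList.2 (Finset.mem_erase.2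
        ⟨hj, Finset.mem_univ j⟩)))
  refine ⟨Q, t, hQ, hPQ, hQx, htx, fun ht => ?_, hmem⟩
  have hQ0 := hl Q hQ hPQ fun j =>
    sub_add_cancel (l j) _ ▸ Q.add_mem (hmem j) (Q.mul_mem_left (C (v j)) ht)
  have hd := j₀.pos
  rw [hP, hQ0, List.length_map, Finset.length_toList, Finset.card_erase_of_mem (Finset.mem_univ _),
    Finset.card_univ, Fintype.card_fin] at hdim
  omega

lemma eval_sum_mul_eq [Fintype ι] {p : ι → Fin n → k} {g : ι → MvPolynomial (Fin n) k}
    [DecidableEq ι] (hg : ∀ i j, eval (p j) (g i) = Pi.single (M := fun _ => k) i 1 j)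
    (u : ι → MvPolynomial (Fin n) k) (j : ι) :
    eval (p j) (∑ i, g i * u i) = eval (p j) (u j) := by
  simp [hg, Pi.single_apply]

lemma aeval_sub_aeval_line_mem {Q : Ideal (MvPolynomial (Fin n) k)} {t : MvPolynomial (Fin n) k}
    {v : Fin d → k} (h : ∀ j, l j - C (v j) * t ∈ Q) (H : MvPolynomial (Fin d) k) :
    aeval l H - Polynomial.aeval t (aeval (fun j => Polynomial.C (v j) * Polynomial.X) H) ∈ Q := by
  have hcomp : (Ideal.Quotient.mkₐ k Q).comp (aeval l) = (Ideal.Quotient.mkₐ k Q).comp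
      ((Polynomial.aeval t).comp (aeval fun j => Polynomial.C (v j) * Polynomial.X)) := by
    ext j
    simp only [AlgHom.comp_apply, aeval_X, map_mul, Polynomial.aeval_C, Polynomial.aeval_X]
    rw [← map_mul]
    exact Ideal.Quotient.eq.2 (h j)
  exact Ideal.Quotient.eq.1 (DFunLike.congr_fun hcomp H)

/-- Here restriction to a curve along which `l` is proportional to `v` reduces the claim to
comparing the lowest powers of a parameter. -/
lemma eq_zero_of_sum_mul_aeval_mem [Infinite k] [P.IsPrime] (hP : quotientDim P = d)
    (hl : ∀ Q : Ideal (MvPolynomial (Fin n) k), Q.IsPrime → P ≤ Q → (∀ j, l j ∈ Q) →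
      quotientDim Q = 0)
    [Fintype ι] [DecidableEq ι] {p : ι → Fin n → k} (hPp : ∀ i, P ≤ RingHom.ker (eval (p i)))
    (hlp : ∀ i j, eval (p i) (l j) = 0) {g : ι → MvPolynomial (Fin n) k}
    (hg : ∀ i j, eval (p j) (g i) = Pi.single (M := fun _ => k) i 1 j)
    {H : ι → MvPolynomial (Fin d) k} (hH : ∑ i, g i * aeval l (H i) ∈ P) : H = 0 := by
  by_contra hne
  obtain ⟨i₀, hi₀⟩ := Function.ne_iff.1 hne
  obtain ⟨v, hv⟩ : ∃ v, eval v (H i₀) ≠ 0 := by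
    by_contra! hc
    exact hi₀ (MvPolynomial.funext fun v => by simpa using hc v)
  rcases eq_or_ne v 0 with rfl | hv0
  · have h0 := hPp i₀ hH
    rw [RingHom.mem_ker, eval_sum_mul_eq hg] at h0
    have hcomp : (aeval (p i₀)).comp (aeval l) = aeval (0 : Fin d → k) := by
      ext j
      simpa [aeval_eq_eval] using hlp i₀ j
    exact hv ((DFunLike.congr_fun hcomp (H i₀)).symm.trans h0)
  let line : MvPolynomial (Fin d) k →ₐ[k] Polynomial k :=
    aeval fun j => Polynomial.C (v j) * Polynomial.X
  have hline : line (H i₀) ≠ 0 := by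
    intro hc
    have hcomp : (Polynomial.aeval (1 : k)).comp line = aeval v := by ext j; simp [line]
    apply hv
    rw [← aeval_eq_eval, ← hcomp, AlgHom.comp_apply, hc, map_zero]
  obtain ⟨a, ψ, i₁, hψ, hi₁⟩ := exists_eq_X_pow_mul (φ := fun i => line (H i)) hline
  obtain ⟨Q, t, hQ, hPQ, hQx, htx, htQ, hlQ⟩ :=
    exists_curve_through_point hP hl (hPp i₁) (hlp i₁) hv0
  have hprod : t ^ a * ∑ i, g i * Polynomial.aeval t (ψ i) ∈ Q := by
    have hdiff : ∑ i, g i * (aeval l (H i) - Polynomial.aeval t (line (H i))) ∈ Q :=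
      Q.sum_mem fun i _ => Q.mul_mem_left _ (aeval_sub_aeval_line_mem hlQ (H i))
    have hsum := Q.sub_mem (hPQ hH) hdiff
    simpa only [hψ, map_mul, map_pow, Polynomial.aeval_X, mul_sub, Finset.sum_sub_distrib,
      sub_sub_cancel, mul_left_comm _ (t ^ a), ← Finset.mul_sum] using hsum
  have heval := hQx (((hQ.mem_or_mem hprod).resolve_left fun h => htQ (hQ.mem_of_pow_mem _ h)))
  rw [RingHom.mem_ker, eval_sum_mul_eq hg, ← aeval_eq_eval, ← Polynomial.aeval_algHom_apply,
    aeval_eq_eval, htx, Polynomial.aeval_def, Polynomial.eval₂_at_zero] at heval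
  exact hi₁ heval

lemma totalDegree_aeval_le {ι : Type*} {l : ι → MvPolynomial (Fin n) k}
    (hl : ∀ j, (l j).totalDegree ≤ 1) (H : MvPolynomial ι k) :
    (aeval l H).totalDegree ≤ H.totalDegree := by
  have hX (m : ℕ) : affineForms k (X : Fin n → MvPolynomial (Fin n) k) ^ m =
      restrictTotalDegree (Fin n) k m := by
    rw [affineForms_pow_eq_map, aeval_X_left]
    exact Submodule.map_id _
  rw [← mem_restrictTotalDegree, ← hX]
  refine pow_le_pow_left' (affineForms_le_iff.2 ⟨one_mem_affineForms _, fun j => ?_⟩) _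
    (aeval_mem_affineForms_pow l le_rfl)
  rw [← pow_one (affineForms k X), hX, mem_restrictTotalDegree]
  exact hl j

lemma exists_card_mul_choose_le_hilbertFunction [Infinite k] [P.IsPrime] (hP : quotientDim P = d)
    (hdeg : ∀ j, (l j).totalDegree ≤ 1)
    (hl : ∀ Q : Ideal (MvPolynomial (Fin n) k), Q.IsPrime → P ≤ Q → (∀ j, l j ∈ Q) →
      quotientDim Q = 0)
    [Fintype ι] {p : ι → Fin n → k} (hp : Function.Injective p)
    (hPp : ∀ i, P ≤ RingHom.ker (eval (p i))) (hlp : ∀ i j, eval (p i) (l j) = 0) :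
    ∃ K, ∀ m, Fintype.card ι * (m + d).choose d ≤ hilbertFunction P (m + K) := by
  classical
  choose g hg using fun i => exists_eval_eq hp (Pi.single (M := fun _ => k) i 1)
  refine ⟨Finset.univ.sup fun i => (g i).totalDegree, fun m => ?_⟩
  let Ψ : (ι → restrictTotalDegree (Fin d) k m) →ₗ[k] MvPolynomial (Fin n) k :=
    ∑ i, LinearMap.mulLeft k (g i) ∘ₗ (aeval l).toLinearMap ∘ₗ
      (restrictTotalDegree (Fin d) k m).subtype ∘ₗ LinearMap.proj i
  have hΨ (H) : Ψ H = ∑ i, g i * aeval l (H i : MvPolynomial (Fin d) k) := by simp [Ψ]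
  let Φ := (Ideal.Quotient.mkₐ k P).toLinearMap ∘ₗ Ψ
  have hinj : Function.Injective Φ := (injective_iff_map_eq_zero Φ).2 fun H hH => by
    have hmem : Ψ H ∈ P := Ideal.Quotient.eq_zero_iff_mem.1 hH
    rw [hΨ] at hmem
    have hzero := eq_zero_of_sum_mul_aeval_mem hP hl hPp hlp hg hmem
    exact funext fun i => Subtype.ext (congrFun hzero i)
  have hrange : LinearMap.range Φ ≤ (restrictTotalDegree (Fin n) k
      (m + Finset.univ.sup fun i => (g i).totalDegree)).map
        (Ideal.Quotient.mkₐ k P).toLinearMap := by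
    rw [LinearMap.range_comp]
    refine Submodule.map_mono ?_
    rintro _ ⟨H, rfl⟩
    rw [mem_restrictTotalDegree, hΨ, add_comm]
    exact totalDegree_finsetSum_le fun i _ => (totalDegree_mul _ _).trans <|
      add_le_add (Finset.le_sup (f := fun i => (g i).totalDegree) (Finset.mem_univ i))
        ((totalDegree_aeval_le hdeg _).trans ((mem_restrictTotalDegree _ _ _).1 (H i).2))
  calc Fintype.card ι * (m + d).choose d
      = Module.finrank k (ι → restrictTotalDegree (Fin d) k m) := by
        rw [Module.finrank_pi_fintype, Finset.sum_const, finrank_restrictTotalDegree,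
          Finset.card_univ, smul_eq_mul]
    _ = Module.finrank k (LinearMap.range Φ) := (LinearMap.finrank_range_of_inj hinj).symm
    _ ≤ hilbertFunction P _ := Submodule.finrank_mono hrange

end SeparatedPoints

section DegreeLowerBound

variable {n : ℕ}

lemma quotientDim_eq_zero_of_finite (Q : Ideal (MvPolynomial (Fin n) ℂ)) [hQ : Q.IsPrime]
    (h : (zeroLocus n (Q : Set (MvPolynomial (Fin n) ℂ))).Finite) : quotientDim Q = 0 := by
  have hle : h.toFinset.inf (fun x => RingHom.ker (eval x)) ≤ Q := by
    intro f hf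
    rw [← vanishingIdeal_zeroLocus Q]
    exact fun x hx => (Submodule.mem_finsetInf.1 hf) x (h.mem_toFinset.2 hx)
  obtain ⟨x, -, hx⟩ := hQ.inf_le'.1 hle
  have hmax : (RingHom.ker (eval x)).IsMaximal :=
    RingHom.ker_isMaximal_of_surjective _ fun a => ⟨C a, eval_C a⟩
  rw [← hmax.eq_of_le hQ.ne_top hx]
  exact quotientDim_eq_zero_of_isMaximal _

lemma exists_affine_equations {k : Type*} [Field k] {d : ℕ} {L : AffineSubspace k (Fin n → k)}
    (hL : Module.finrank k L.direction + d = n) {x₀ : Fin n → k} (hx₀ : x₀ ∈ L) :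
    ∃ l : Fin d → MvPolynomial (Fin n) k,
      (∀ j, (l j).totalDegree ≤ 1) ∧ ∀ x, x ∈ L ↔ ∀ j, eval x (l j) = 0 := by
  have hquot : Module.finrank k ((Fin n → k) ⧸ L.direction) = d := by
    have := Submodule.finrank_quotient_add_finrank L.direction
    rw [Module.finrank_fin_fun] at this
    omega
  let φ : (Fin n → k) →ₗ[k] (Fin d → k) :=
    (Module.finBasisOfFinrankEq k _ hquot).equivFun.toLinearMap ∘ₗ L.direction.mkQ
  have hφ (x : Fin n → k) : φ x = 0 ↔ x ∈ L.direction := by simp [φ]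
  let l (j : Fin d) : MvPolynomial (Fin n) k :=
    ∑ i, C (φ (Pi.single i 1) j) * X i - C (φ x₀ j)
  have heval (x : Fin n → k) (j : Fin d) : eval x (l j) = φ (x - x₀) j := by
    have hx : φ x = ∑ i, x i • φ (Pi.single i 1) := by
      conv_lhs => rw [pi_eq_sum_univ' x, map_sum]
      simp
    simp [l, map_sub φ, hx, mul_comm]
  refine ⟨l, fun j => ?_, fun x => ?_⟩
  · refine (totalDegree_sub _ _).trans (max_le ?_ (by simp))
    exact totalDegree_finsetSum_le fun i _ => (totalDegree_mul _ _).trans (by simp)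
  · rw [← AffineSubspace.vsub_right_mem_direction_iff_mem hx₀, vsub_eq_sub, ← hφ]
    simp only [heval, _root_.funext_iff, Pi.zero_apply]

lemma IsIrredVariety.exists_ncard_mul_choose_le {V : Set (Fin n → ℂ)} (hV : IsIrredVariety n V)
    {L : AffineSubspace ℂ (Fin n → ℂ)} (hL : Module.finrank ℂ L.direction = n - dim n V)
    (hfin : (V ∩ ↑L).Finite) :
    ∃ K, ∀ m, (V ∩ ↑L).ncard * (m + dim n V).choose (dim n V) ≤
      hilbertFunction (vanishingIdeal n V) (m + K) := by
  have := hV.isPrime_vanishingIdeal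
  rcases (V ∩ ↑L).eq_empty_or_nonempty with h | ⟨x₀, -, hx₀⟩
  · exact ⟨0, fun m => by simp [h]⟩
  have hdim := hV.dim_le
  obtain ⟨l, hdeg, hl⟩ := exists_affine_equations (d := dim n V) (by omega) hx₀
  have := hfin.fintype
  have hcut (Q : Ideal (MvPolynomial (Fin n) ℂ)) (_ : Q.IsPrime) (hQ : vanishingIdeal n V ≤ Q)
      (hlQ : ∀ j, l j ∈ Q) : quotientDim Q = 0 :=
    quotientDim_eq_zero_of_finite Q <| hfin.subset fun x hx =>
      ⟨hV.1.zeroLocus_vanishingIdeal.subset (zeroLocus_anti hQ hx),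
        (hl x).2 fun j => hx _ (hlQ j)⟩
  obtain ⟨K, hK⟩ := exists_card_mul_choose_le_hilbertFunction hV.dim_eq.symm hdeg hcut
    (p := fun x : ↥(V ∩ ↑L) => x.1) Subtype.val_injective
    (fun x f hf => hf x x.2.1) (fun x => (hl x).1 x.2.2)
  refine ⟨K, fun m => ?_⟩
  rw [← Nat.card_coe_set_eq, Nat.card_eq_fintype_card]
  exact hK m

end DegreeLowerBound

section GenericRank

variable (A M : Type*) [CommRing A] [IsDomain A] [AddCommGroup M] [Module A M] [Module.Finite A M]

lemma exists_ne_zero_smul_mem_span_fin_finrank :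
    ∃ (v : Fin (Module.finrank A M) → M) (a : A), LinearIndependent A v ∧ a ≠ 0 ∧
      ∀ x : M, a • x ∈ Submodule.span A (range v) := by
  obtain ⟨v, hv⟩ := exists_linearIndependent_of_le_finrank (le_refl (Module.finrank A M))
  have htorsion : Module.IsTorsion A (M ⧸ Submodule.span A (range v)) := by
    rw [← Module.finrank_eq_zero_iff_isTorsion]
    have hspan := finrank_span_eq_card hv
    have hadd := Submodule.finrank_quotient_add_finrank (Submodule.span A (range v))
    rw [Fintype.card_fin] at hspan
    omega
  obtain ⟨a, ha, ha0⟩ := Submodule.annihilator_top_inter_nonZeroDivisors htorsion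
  refine ⟨v, a, hv, nonZeroDivisors.ne_zero ha0, fun x => ?_⟩
  rw [← Submodule.Quotient.mk_eq_zero, Submodule.Quotient.mk_smul]
  exact Submodule.mem_annihilator.1 ha _ trivial

lemma exists_injective_toPi_finrank [Module.IsTorsionFree A M] :
    ∃ f : M →ₗ[A] Fin (Module.finrank A M) → A, Function.Injective f := by
  obtain ⟨v, a, hv, ha, hspan⟩ := exists_ne_zero_smul_mem_span_fin_finrank A M
  refine ⟨(Module.Basis.span hv).equivFun.toLinearMap ∘ₗ
    (LinearMap.lsmul A M a).codRestrict _ hspan, ?_⟩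
  rw [LinearMap.coe_comp]
  refine (Module.Basis.span hv).equivFun.injective.comp fun x y hxy => ?_
  exact smul_right_injective M ha (congrArg Subtype.val hxy)

end GenericRank

section PrimitiveElement

variable (A B : Type*) [CommRing A] [IsDomain A] [IsIntegrallyClosed A] [CharZero A]
  [CommRing B] [IsDomain B] [Algebra A B] [Module.Finite A B] [FaithfulSMul A B]

lemma exists_natDegree_minpoly_eq_finrank :
    ∃ θ : B, (minpoly A θ).natDegree = Module.finrank A B := by
  let K := FractionRing A
  let L := FractionRing B
  let _ : Algebra K L := FractionRing.liftAlgebra A L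
  have : FiniteDimensional K L := .of_isLocalization A B (nonZeroDivisors A)
  obtain ⟨α, hα⟩ := Field.exists_primitive_element K L
  obtain ⟨⟨θ, ⟨_, a, ha, rfl⟩⟩, hθ⟩ :=
    IsLocalization.surj (Algebra.algebraMapSubmonoid B (nonZeroDivisors A)) α
  have ha0 : algebraMap A L a ≠ 0 := by simpa using nonZeroDivisors.ne_zero ha
  have hαθ : α = algebraMap B L θ * (algebraMap K L (algebraMap A K a))⁻¹ := by
    rw [← IsScalarTower.algebraMap_apply, eq_mul_inv_iff_mul_eq₀ ha0, ← hθ,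
      ← IsScalarTower.algebraMap_apply]
  have htop : IntermediateField.adjoin K {algebraMap B L θ} = ⊤ := by
    rw [eq_top_iff, ← hα, IntermediateField.adjoin_simple_le_iff, hαθ]
    exact mul_mem (IntermediateField.mem_adjoin_simple_self _ _) (inv_mem (algebraMap_mem _ _))
  refine ⟨θ, ?_⟩
  rw [← IsFractionRing.finrank_eq A K B L,
    ← (Field.primitive_element_iff_minpoly_natDegree_eq K _).1 htop,
    minpoly.isIntegrallyClosed_eq_field_fractions K L (Algebra.IsIntegral.isIntegral (R := A) θ),
    (minpoly.monic (Algebra.IsIntegral.isIntegral θ)).natDegree_map]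

variable {A B} in
lemma exists_mul_minpoly_add_mul_derivative_eq_C (θ : B) :
    ∃ (c : A) (a b : Polynomial A), c ≠ 0 ∧
      a * minpoly A θ + b * Polynomial.derivative (minpoly A θ) = Polynomial.C c := by
  let K := FractionRing A
  let L := FractionRing B
  let _ : Algebra K L := FractionRing.liftAlgebra A L
  have : FiniteDimensional K L := .of_isLocalization A B (nonZeroDivisors A)
  have hsep : (minpoly K (algebraMap B L θ)).Separable := Algebra.IsSeparable.isSeparable K _
  rw [minpoly.isIntegrallyClosed_eq_field_fractions K L
    (Algebra.IsIntegral.isIntegral (R := A) θ)] at hsep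
  obtain ⟨a, b, hab⟩ := hsep
  obtain ⟨s, hs, ha⟩ := IsLocalization.integerNormalization_spec (nonZeroDivisors A) a
  obtain ⟨t, ht, hb⟩ := IsLocalization.integerNormalization_spec (nonZeroDivisors A) b
  refine ⟨s * t, Polynomial.C t * IsLocalization.integerNormalization (nonZeroDivisors A) a,
    Polynomial.C s * IsLocalization.integerNormalization (nonZeroDivisors A) b,
    nonZeroDivisors.ne_zero (mul_mem hs ht), ?_⟩
  apply Polynomial.map_injective (algebraMap A K) (IsFractionRing.injective A K)
  simp only [Polynomial.map_add, Polynomial.map_mul, Polynomial.map_C, ha, hb,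
    ← Polynomial.derivative_map, ← algebraMap_smul K s a, ← algebraMap_smul K t b,
    Polynomial.smul_eq_C_mul, map_mul]
  linear_combination
    (Polynomial.C (algebraMap A K s) * Polynomial.C (algebraMap A K t)) * hab

end PrimitiveElement

section Fiber

variable {k A B : Type*} [Field k] [CommRing A] [Algebra k A] [CommRing B] [Algebra k B]

lemma exists_algHom_comp_eq [IsAlgClosed k] [Algebra.FiniteType k B] {f : A →ₐ[k] B}
    (hf : f.toRingHom.IsIntegral) {ψ : A →ₐ[k] k} (h : RingHom.ker f ≤ RingHom.ker ψ) :
    ∃ φ : B →ₐ[k] k, φ.comp f = ψ := by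
  algebraize [f.toRingHom]
  have : (RingHom.ker ψ).IsMaximal :=
    RingHom.ker_isMaximal_of_surjective ψ fun c => ⟨algebraMap k A c, ψ.commutes c⟩
  obtain ⟨Q, hQ, hcomap⟩ := Ideal.exists_ideal_over_maximal_of_isIntegral (S := B) _ h
  let _ : Field (B ⧸ Q) := Ideal.Quotient.field Q
  have : Module.Finite k (B ⧸ Q) := finite_of_finite_type_of_isJacobsonRing k (B ⧸ Q)
  let E := AlgEquiv.ofBijective (Algebra.ofId k (B ⧸ Q))
    IsAlgClosed.algebraMap_bijective_of_isIntegral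
  let φ := E.symm.toAlgHom.comp (Ideal.Quotient.mkₐ k Q)
  have hφ {b : B} (hb : b ∈ Q) : φ b = 0 := by
    have : Ideal.Quotient.mk Q b = 0 := Ideal.Quotient.eq_zero_iff_mem.2 hb
    simp [φ, this]
  refine ⟨φ, AlgHom.ext fun a => ?_⟩
  have ha : a - algebraMap k A (ψ a) ∈ Q.comap f := hcomap.ge (by simp)
  simpa [sub_eq_zero] using hφ ha

variable [Algebra A B] [Module.Finite A B]

lemma finite_setOf_algHom_apply (χ : A →ₐ[k] k) (b : B) :
    {t | ∃ φ : B →ₐ[k] k, (∀ a, φ (algebraMap A B a) = χ a) ∧ φ b = t}.Finite := by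
  have hmonic : ((minpoly A b).map χ.toRingHom).Monic :=
    (minpoly.monic (Algebra.IsIntegral.isIntegral b)).map _
  classical
  refine ((minpoly A b).map χ.toRingHom).roots.toFinset.finite_toSet.subset ?_
  rintro _ ⟨φ, hφ, rfl⟩
  have hcomp : χ.toRingHom = φ.toRingHom.comp (algebraMap A B) := RingHom.ext fun a => (hφ a).symm
  rw [Finset.mem_coe, Multiset.mem_toFinset, Polynomial.mem_roots hmonic.ne_zero,
    Polynomial.IsRoot.def, Polynomial.eval_map, hcomp]
  have := congrArg φ (minpoly.aeval A b)
  rw [map_zero] at this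
  rw [← this]
  exact (Polynomial.hom_eval₂ _ _ φ.toRingHom b).symm

variable [IsScalarTower k A B] [Algebra.FiniteType k A]

lemma exists_algHom_apply_eq_of_isRoot_minpoly [IsAlgClosed k] [IsDomain A] [IsIntegrallyClosed A]
    [IsDomain B] [FaithfulSMul A B] (χ : A →ₐ[k] k) (θ : B) {τ : k}
    (hτ : ((minpoly A θ).map χ.toRingHom).IsRoot τ) :
    ∃ φ : B →ₐ[k] k, φ θ = τ ∧ ∀ a, φ (algebraMap A B a) = χ a := by
  have : Algebra.FiniteType k B := .trans (S := A) inferInstance inferInstance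
  let f : Polynomial A →ₐ[k] B := (Polynomial.aeval θ).restrictScalars k
  let ψ : Polynomial A →ₐ[k] k := (Polynomial.aeval τ).comp (Polynomial.mapAlgHom χ)
  have hker : RingHom.ker f ≤ RingHom.ker ψ := by
    intro g hg
    obtain ⟨q, rfl⟩ := minpoly.isIntegrallyClosed_dvd (Algebra.IsIntegral.isIntegral θ) hg
    have hroot : ψ (minpoly A θ) = 0 := hτ
    rw [RingHom.mem_ker, map_mul, hroot, zero_mul]
  have hcomp : f.toRingHom.comp Polynomial.C = algebraMap A B := by ext; simp [f]
  have hint : f.toRingHom.IsIntegral := RingHom.IsIntegral.tower_top Polynomial.C _ <| by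
    rw [hcomp]
    exact algebraMap_isIntegral_iff.2 inferInstance
  obtain ⟨φ, hφ⟩ := exists_algHom_comp_eq hint hker
  refine ⟨φ, ?_, fun a => ?_⟩
  · simpa [f, ψ] using DFunLike.congr_fun hφ Polynomial.X
  · simpa [f, ψ] using DFunLike.congr_fun hφ (Polynomial.C a)

end Fiber

section FiniteCover

variable (k B : Type*) {ι : Type*} [Field k] [CommRing B] [IsDomain B] [Algebra k B]

lemma exists_injective_algHom_fiber [IsAlgClosed k] [CharZero k] [Finite ι]
    [Algebra (MvPolynomial ι k) B] [IsScalarTower k (MvPolynomial ι k) B]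
    [Module.Finite (MvPolynomial ι k) B] [FaithfulSMul (MvPolynomial ι k) B] :
    ∃ (y : ι → k) (φ : Fin (Module.finrank (MvPolynomial ι k) B) → B →ₐ[k] k),
      Function.Injective φ ∧ ∀ i a, φ i (algebraMap (MvPolynomial ι k) B a) = aeval y a := by
  obtain ⟨θ, hθ⟩ := exists_natDegree_minpoly_eq_finrank (MvPolynomial ι k) B
  obtain ⟨c, a, b, hc, hab⟩ :=
    exists_mul_minpoly_add_mul_derivative_eq_C (A := MvPolynomial ι k) θ
  obtain ⟨y, hy⟩ : ∃ y : ι → k, aeval y c ≠ 0 := by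
    by_contra! h
    exact hc (MvPolynomial.funext fun y => by simpa [aeval_eq_eval] using h y)
  let F := (minpoly (MvPolynomial ι k) θ).map (aeval y).toRingHom
  have hsep : F.Separable := by
    have h := congrArg (Polynomial.map (aeval y).toRingHom) hab
    simp only [Polynomial.map_add, Polynomial.map_mul, Polynomial.map_C,
      ← Polynomial.derivative_map] at h
    refine ⟨Polynomial.C (aeval y c)⁻¹ * a.map (aeval y).toRingHom,
      Polynomial.C (aeval y c)⁻¹ * b.map (aeval y).toRingHom, ?_⟩
    rw [mul_assoc, mul_assoc, ← mul_add, h]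
    exact (Polynomial.C_mul.symm.trans (congrArg _ (inv_mul_cancel₀ hy))).trans Polynomial.C_1
  classical
  have hcard : F.roots.toFinset.card = Module.finrank (MvPolynomial ι k) B := by
    rw [Multiset.toFinset_card_of_nodup (Polynomial.nodup_roots hsep),
      ← (IsAlgClosed.splits F).natDegree_eq_card_roots, ← hθ,
      (minpoly.monic (Algebra.IsIntegral.isIntegral θ)).natDegree_map]
  let τ := (Finset.equivFinOfCardEq hcard).symm
  choose φ hφθ hφ using fun i => exists_algHom_apply_eq_of_isRoot_minpoly (aeval y) θ
    (Polynomial.mem_roots'.1 (Multiset.mem_toFinset.1 (τ i).2)).2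
  refine ⟨y, φ, fun i j hij => τ.injective (Subtype.ext ?_), hφ⟩
  rw [← hφθ i, ← hφθ j, hij]

variable {k B}

lemma exists_finrank_map_mul_le {e : ℕ} [Algebra (MvPolynomial (Fin e) k) B]
    [IsScalarTower k (MvPolynomial (Fin e) k) B] [Module.Finite (MvPolynomial (Fin e) k) B]
    [FaithfulSMul (MvPolynomial (Fin e) k) B] {U : Submodule k B} (hU : U.FG) :
    ∃ c, ∀ m, Module.finrank k ↥((restrictTotalDegree (Fin e) k m).map
        (IsScalarTower.toAlgHom k (MvPolynomial (Fin e) k) B).toLinearMap * U) ≤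
      Module.finrank (MvPolynomial (Fin e) k) B * (m + c + e).choose e := by
  have : Module.IsTorsionFree (MvPolynomial (Fin e) k) B :=
    Module.isTorsionFree_iff_algebraMap_injective.2 (FaithfulSMul.algebraMap_injective _ _)
  obtain ⟨f, hf⟩ := exists_injective_toPi_finrank (MvPolynomial (Fin e) k) B
  obtain ⟨S, rfl⟩ := hU
  let c := S.sup fun u => Finset.univ.sup fun i => (f u i).totalDegree
  have hc {u : B} (hu : u ∈ S) (i) : (f u i).totalDegree ≤ c :=
    (Finset.le_sup (f := fun i => (f u i).totalDegree) (Finset.mem_univ i)).trans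
      (Finset.le_sup (f := fun u => Finset.univ.sup fun i => (f u i).totalDegree) hu)
  refine ⟨c, fun m => ?_⟩
  let D := Module.finrank (MvPolynomial (Fin e) k) B
  let incl : (Fin D → restrictTotalDegree (Fin e) k (m + c)) →ₗ[k]
      Fin D → MvPolynomial (Fin e) k :=
    LinearMap.pi fun i => (restrictTotalDegree (Fin e) k (m + c)).subtype ∘ₗ LinearMap.proj i
  have hrange : ((restrictTotalDegree (Fin e) k m).map
      (IsScalarTower.toAlgHom k (MvPolynomial (Fin e) k) B).toLinearMap *
        Submodule.span k (S : Set B)).map (f.restrictScalars k) ≤ LinearMap.range incl := by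
    rw [Submodule.map_le_iff_le_comap, Submodule.mul_le]
    rintro _ ⟨g, hg, rfl⟩ u hu
    induction hu using Submodule.span_induction with
    | mem u hu =>
      have hdeg (i : Fin D) : (g * f u i).totalDegree ≤ m + c :=
        (totalDegree_mul _ _).trans
          (add_le_add ((mem_restrictTotalDegree _ _ _).1 hg) (hc hu i))
      refine ⟨fun i => ⟨g * f u i, (mem_restrictTotalDegree _ _ _).2 (hdeg i)⟩, ?_⟩
      have hf_mul : f (algebraMap (MvPolynomial (Fin e) k) B g * u) = g • f u := by
        rw [← Algebra.smul_def, map_smul]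
      exact hf_mul.symm
    | zero => rw [mul_zero]; exact zero_mem _
    | add u v _ _ hu hv => rw [mul_add]; exact add_mem hu hv
    | smul a u _ hu => rw [mul_smul_comm]; exact Submodule.smul_mem _ _ hu
  calc _ = Module.finrank k (Submodule.map (f.restrictScalars k) _) :=
        (Submodule.equivMapOfInjective (f.restrictScalars k) hf _).finrank_eq
    _ ≤ Module.finrank k (LinearMap.range incl) := Submodule.finrank_mono hrange
    _ ≤ Module.finrank k (Fin D → restrictTotalDegree (Fin e) k (m + c)) :=
        LinearMap.finrank_range_le incl
    _ = D * (m + c + e).choose e := by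
        rw [Module.finrank_pi_fintype, Finset.sum_const, finrank_restrictTotalDegree,
          Finset.card_univ, Fintype.card_fin, smul_eq_mul]

end FiniteCover

lemma le_of_forall_mul_choose_le {N M K d : ℕ}
    (h : ∀ m, N * (m + d).choose d ≤ M * (m + K + d).choose d) : N ≤ M := by
  have hlim (x : ℝ) : Filter.Tendsto (fun a : ℕ => (a.choose d : ℝ) * (1 / (a + x)) ^ d)
      Filter.atTop (nhds (1 ^ d / d.factorial)) :=
    ProbabilityTheory.tendsto_choose_mul_pow_atTop d <| by
      simpa only [mul_one_div] using tendsto_natCast_div_add_atTop x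
  have hN := ((hlim 0).comp (Filter.tendsto_add_atTop_nat d)).const_mul (N : ℝ)
  have hM := ((hlim (-K)).comp (Filter.tendsto_add_atTop_nat (K + d))).const_mul (M : ℝ)
  have hle := le_of_tendsto_of_tendsto' hN hM fun m => by
    have hm : (N : ℝ) * (m + d).choose d ≤ M * (m + (K + d)).choose d := by
      rw [← add_assoc]
      exact_mod_cast h m
    have hden : ((m + (K + d) : ℕ) : ℝ) + -K = ((m + d : ℕ) : ℝ) + 0 := by push_cast; ring
    simp only [Function.comp_apply, hden, ← mul_assoc]
    gcongr
  exact_mod_cast le_of_mul_le_mul_right hle (by positivity)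

section NormalizationDegree

variable {k B : Type*} [Field k] [CommRing B] [Algebra k B]

lemma exists_linearMap_apply_comp_eq {n e : ℕ} {y : Fin n → B} {z : Fin e → B}
    (hz : ∀ i, z i ∈ Submodule.span k (range y)) (hli : LinearIndependent k z) :
    ∃ l : (Fin n → k) →ₗ[k] Fin e → k, Module.finrank k (LinearMap.ker l) = n - e ∧
      ∀ φ : B →ₗ[k] k, l (φ ∘ y) = φ ∘ z := by
  choose a ha using fun i => (Submodule.mem_span_range_iff_exists_fun k).1 (hz i)
  have hrow : LinearIndependent k (Matrix.of a).row := by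
    refine .of_comp (Fintype.linearCombination k y) ?_
    convert hli
    exact _root_.funext ha
  refine ⟨(Matrix.of a).mulVecLin, ?_, fun φ => _root_.funext fun i => ?_⟩
  · have hrank : (Matrix.of a).rank = e := by simpa using hrow.rank_matrix
    have hadd := LinearMap.finrank_range_add_finrank_ker (Matrix.of a).mulVecLin
    rw [← Matrix.rank, hrank, Module.finrank_fin_fun] at hadd
    omega
  · rw [Function.comp_apply, ← ha i, map_sum]
    simp only [map_smul, Matrix.mulVecLin_apply, Matrix.mulVec, dotProduct, Matrix.of_apply,
      smul_eq_mul, Function.comp_apply]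

variable {ι : Type*} {e : ℕ} {y : ι → B} {z : Fin e → B}

lemma IsLinearNormalization.finite_setOf_algHom_apply (h : IsLinearNormalization k y z)
    (hy : Function.Surjective (aeval (R := k) y)) (a : Fin e → k) (b : B) :
    {t | ∃ φ : B →ₐ[k] k, φ ∘ z = a ∧ φ b = t}.Finite := by
  have := h.finite hy
  algebraize [(aeval (R := k) z).toRingHom]
  refine (Paper.finite_setOf_algHom_apply (A := MvPolynomial (Fin e) k) (aeval a) b).subset ?_
  rintro _ ⟨φ, rfl, rfl⟩
  exact ⟨φ, fun f => comp_aeval_apply (f := z) φ f, rfl⟩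

lemma IsLinearNormalization.exists_fiber_and_finrank_le [IsDomain B] [IsAlgClosed k] [CharZero k]
    (h : IsLinearNormalization k y z) (hy : Function.Surjective (aeval (R := k) y)) :
    ∃ D, 0 < D ∧
      (∃ c, ∀ m, Module.finrank k ↥(affineForms k y ^ m) ≤ D * (m + c + e).choose e) ∧
      ∃ (a : Fin e → k) (φ : Fin D → B →ₐ[k] k), Function.Injective φ ∧ ∀ i, φ i ∘ z = a := by
  have := h.finite hy
  algebraize [(aeval (R := k) z).toRingHom]
  have : IsScalarTower k (MvPolynomial (Fin e) k) B :=
    .of_algebraMap_eq fun c => (aeval_C (R := k) z c).symm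
  have : FaithfulSMul (MvPolynomial (Fin e) k) B :=
    (faithfulSMul_iff_algebraMap_injective _ _).2 h.algebraicIndependent
  have : Module.IsTorsionFree (MvPolynomial (Fin e) k) B :=
    Module.isTorsionFree_iff_algebraMap_injective.2 h.algebraicIndependent
  refine ⟨Module.finrank (MvPolynomial (Fin e) k) B, Module.finrank_pos, ?_, ?_⟩
  · obtain ⟨U, hU, hUm⟩ := h.exists_coeff
    obtain ⟨c, hc⟩ := exists_finrank_map_mul_le (e := e) hU
    refine ⟨c, fun m => le_trans ?_ (hc m)⟩
    have := Module.Finite.iff_fg.2 (((affineForms_fg (k := k) z).pow m).mul hU)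
    refine (Submodule.finrank_mono (hUm m)).trans_eq ?_
    rw [affineForms_pow_eq_map]
    rfl
  · obtain ⟨a, φ, hφ, hφa⟩ := exists_injective_algHom_fiber k B (ι := Fin e)
    refine ⟨a, φ, hφ, fun i => _root_.funext fun j => ?_⟩
    have hzj : algebraMap (MvPolynomial (Fin e) k) B (X j) = z j := aeval_X z j
    rw [Function.comp_apply, ← hzj, hφa, aeval_X]

end NormalizationDegree

section Degree

variable {n : ℕ} {V : Set (Fin n → ℂ)}

lemma exists_algHom_comp_coord_eq {x : Fin n → ℂ} (hx : x ∈ V) :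
    ∃ φ : (MvPolynomial (Fin n) ℂ ⧸ vanishingIdeal n V) →ₐ[ℂ] ℂ,
      φ ∘ coord (vanishingIdeal n V) = x :=
  ⟨Ideal.Quotient.liftₐ _ (aeval x) fun f hf => by simpa [aeval_eq_eval] using hf x hx,
    _root_.funext fun i => aeval_X x i⟩

lemma IsAlgebraicSet.algHom_comp_coord_mem (hV : IsAlgebraicSet n V)
    (φ : (MvPolynomial (Fin n) ℂ ⧸ vanishingIdeal n V) →ₐ[ℂ] ℂ) :
    φ ∘ coord (vanishingIdeal n V) ∈ V := by
  refine hV.zeroLocus_vanishingIdeal.subset fun f hf => ?_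
  have hmk : aeval (coord (vanishingIdeal n V)) f = 0 := by
    rw [aeval_coord]
    exact Ideal.Quotient.eq_zero_iff_mem.2 hf
  have hφ := comp_aeval_apply (f := coord (vanishingIdeal n V)) φ f
  rw [hmk, map_zero] at hφ
  exact hφ.symm

lemma algHom_comp_coord_injective {k : Type*} [Field k] (P : Ideal (MvPolynomial (Fin n) k)) :
    Function.Injective fun φ : (MvPolynomial (Fin n) k ⧸ P) →ₐ[k] k => φ ∘ coord P :=
  fun _ _ h => Ideal.Quotient.algHom_ext k (MvPolynomial.algHom_ext fun i => congrFun h i)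

lemma hilbertFunction_eq_finrank_affineForms_pow {k : Type*} [Field k]
    (P : Ideal (MvPolynomial (Fin n) k)) (m : ℕ) :
    hilbertFunction P m = Module.finrank k ↥(affineForms k (coord P) ^ m) := by
  rw [affineForms_pow_eq_map, aeval_coord, hilbertFunction]

lemma IsIrredVariety.exists_le_ncard_inter (hV : IsIrredVariety n V) :
    ∃ D, 0 < D ∧
      (∃ c, ∀ m, hilbertFunction (vanishingIdeal n V) m ≤
        D * (m + c + dim n V).choose (dim n V)) ∧
      ∃ L : AffineSubspace ℂ (Fin n → ℂ), Module.finrank ℂ L.direction = n - dim n V ∧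
        (V ∩ ↑L).Finite ∧ D ≤ (V ∩ ↑L).ncard := by
  have := hV.isPrime_vanishingIdeal
  have hsurj := aeval_coord_surjective (vanishingIdeal n V)
  obtain ⟨z, hz⟩ : ∃ z : Fin (dim n V) → _, IsLinearNormalization ℂ (coord _) z :=
    hV.dim_eq ▸ exists_isLinearNormalization_coord (vanishingIdeal n V)
  obtain ⟨l, hker, hl⟩ :=
    exists_linearMap_apply_comp_eq hz.mem_span hz.algebraicIndependent.linearIndependent
  obtain ⟨D, hD, hup, a, φ, hφ, hφa⟩ := hz.exists_fiber_and_finrank_le hsurj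
  have hlφ (i : Fin D) : l (φ i ∘ coord (vanishingIdeal n V)) = a :=
    (hl (φ i).toLinearMap).trans (hφa i)
  let x₀ := φ ⟨0, hD⟩ ∘ coord (vanishingIdeal n V)
  let L : AffineSubspace ℂ (Fin n → ℂ) := .mk' x₀ (LinearMap.ker l)
  have hL (x : Fin n → ℂ) : x ∈ L ↔ l x = a := by
    rw [AffineSubspace.mem_mk', LinearMap.mem_ker, vsub_eq_sub, map_sub, sub_eq_zero, hlφ]
  have hfin : (V ∩ ↑L).Finite := by
    refine (Set.Finite.pi' fun j => hz.finite_setOf_algHom_apply hsurj a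
      (coord (vanishingIdeal n V) j)).subset ?_
    rintro x ⟨hxV, hxL⟩
    obtain ⟨ψ, rfl⟩ := exists_algHom_comp_coord_eq hxV
    exact fun j => ⟨ψ, (hl ψ.toLinearMap).symm.trans ((hL _).1 hxL), rfl⟩
  refine ⟨D, hD, ?_, L, by rw [AffineSubspace.direction_mk', hker], hfin, ?_⟩
  · simpa only [hilbertFunction_eq_finrank_affineForms_pow] using hup
  · have hinj : Function.Injective fun i => φ i ∘ coord (vanishingIdeal n V) :=
      (algHom_comp_coord_injective _).comp hφ
    have hsub : range (fun i => φ i ∘ coord (vanishingIdeal n V)) ⊆ V ∩ ↑L :=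
      range_subset_iff.2 fun i => ⟨hV.1.algHom_comp_coord_mem (φ i), (hL _).2 (hlφ i)⟩
    calc D = (range fun i => φ i ∘ coord (vanishingIdeal n V)).ncard := by
          rw [← image_univ, ncard_image_of_injective _ hinj, ncard_univ, Nat.card_fin]
      _ ≤ _ := ncard_le_ncard hsub hfin

lemma IsIrredVariety.ncard_inter_le (hV : IsIrredVariety n V) {D c : ℕ}
    (hD : ∀ m, hilbertFunction (vanishingIdeal n V) m ≤ D * (m + c + dim n V).choose (dim n V))
    {L : AffineSubspace ℂ (Fin n → ℂ)} (hL : Module.finrank ℂ L.direction = n - dim n V)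
    (hfin : (V ∩ ↑L).Finite) : (V ∩ ↑L).ncard ≤ D := by
  obtain ⟨K, hK⟩ := hV.exists_ncard_mul_choose_le hL hfin
  refine le_of_forall_mul_choose_le (K := K + c) (d := dim n V) fun m => ?_
  rw [← add_assoc]
  exact (hK m).trans (hD _)

lemma IsIrredVariety.exists_ncard_inter_eq_degree (hV : IsIrredVariety n V) :
    0 < degree n V ∧
      (∃ c, ∀ m, hilbertFunction (vanishingIdeal n V) m ≤
        degree n V * (m + c + dim n V).choose (dim n V)) ∧
      ∃ L : AffineSubspace ℂ (Fin n → ℂ), Module.finrank ℂ L.direction = n - dim n V ∧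
        (V ∩ ↑L).Finite ∧ (V ∩ ↑L).ncard = degree n V := by
  obtain ⟨D, hD, ⟨c, hc⟩, L, hL, hfin, hDL⟩ := hV.exists_le_ncard_inter
  have heq : (V ∩ ↑L).ncard = D := (hV.ncard_inter_le hc hL hfin).antisymm hDL
  have hdeg : degree n V = D := by
    refine IsGreatest.csSup_eq ⟨⟨L, hL, hfin, heq⟩, ?_⟩
    rintro _ ⟨L', hL', hfin', rfl⟩
    exact hV.ncard_inter_le hc hL' hfin'
  subst hdeg
  exact ⟨hD, ⟨c, hc⟩, L, hL, hfin, heq⟩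

lemma IsIrredVariety.degree_pos (hV : IsIrredVariety n V) : 0 < degree n V :=
  hV.exists_ncard_inter_eq_degree.1

lemma IsIrredVariety.exists_hilbertFunction_le (hV : IsIrredVariety n V) :
    ∃ c, ∀ m, hilbertFunction (vanishingIdeal n V) m ≤
      degree n V * (m + c + dim n V).choose (dim n V) :=
  hV.exists_ncard_inter_eq_degree.2.1

lemma IsIrredVariety.exists_degree_mul_choose_le (hV : IsIrredVariety n V) :
    ∃ K, ∀ m, degree n V * (m + dim n V).choose (dim n V) ≤
      hilbertFunction (vanishingIdeal n V) (m + K) := by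
  obtain ⟨-, -, L, hL, hfin, hdeg⟩ := hV.exists_ncard_inter_eq_degree
  exact hdeg ▸ hV.exists_ncard_mul_choose_le hL hfin

end Degree

section Bezout

variable {n s : ℕ} {V W : Set (Fin n → ℂ)}

lemma totalDegree_pos_of_mem_of_notMem {k ι : Type*} [Field k] {P Q : Ideal (MvPolynomial ι k)}
    (hQ : Q ≠ ⊤) {f : MvPolynomial ι k} (hfQ : f ∈ Q) (hfP : f ∉ P) : 0 < f.totalDegree := by
  refine Nat.pos_of_ne_zero fun hdeg => ?_
  rw [totalDegree_eq_zero_iff_eq_C] at hdeg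
  have hcoeff : coeff 0 f ≠ 0 := fun h0 => hfP <| by
    rw [hdeg, h0, C_0]
    exact zero_mem P
  rw [hdeg] at hfQ
  exact hQ (Ideal.eq_top_of_isUnit_mem _ hfQ ((isUnit_iff_ne_zero.2 hcoeff).map C))

lemma IsIrredVariety.degree_le_totalDegree_mul_degree (hV : IsIrredVariety n V)
    (hW : IsIrredVariety n W) (hVW : V ⊆ W) (hdim : dim n V + 1 = dim n W)
    {f : MvPolynomial (Fin n) ℂ} (hfV : f ∈ vanishingIdeal n V) (hfW : f ∉ vanishingIdeal n W) :
    degree n V ≤ f.totalDegree * degree n W := by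
  have := hW.isPrime_vanishingIdeal
  have hpos := totalDegree_pos_of_mem_of_notMem hV.isPrime_vanishingIdeal.ne_top hfV hfW
  obtain ⟨K, hK⟩ := hV.exists_degree_mul_choose_le
  obtain ⟨c, hc⟩ := hW.exists_hilbertFunction_le
  refine le_of_forall_mul_choose_le (K := K + c) (d := dim n W) fun m => ?_
  calc degree n V * (m + dim n W).choose (dim n W)
      ≤ f.totalDegree * hilbertFunction (vanishingIdeal n W) (m + K) := by
        rw [← hdim]
        exact mul_choose_succ_le_mul_hilbertFunction (vanishingIdeal_anti hVW) hfW hfV hpos hK m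
    _ ≤ f.totalDegree * (degree n W * (m + K + c + dim n W).choose (dim n W)) :=
        Nat.mul_le_mul_left _ (hc _)
    _ = f.totalDegree * degree n W * (m + (K + c) + dim n W).choose (dim n W) := by
        rw [mul_assoc, add_assoc m K c]

lemma IsIrredVariety.exists_hypersurface_section (hV : IsIrredVariety n V)
    (hW : IsIrredVariety n W) (hVW : V ⊆ W) (hdim : dim n W = n - s) (hs : s < n - dim n V) :
    ∃ W', IsIrredVariety n W' ∧ V ⊆ W' ∧ W' ⊆ W ∧ dim n W' + 1 = dim n W ∧
      ∃ f ∈ vanishingIdeal n W', f ∉ vanishingIdeal n W ∧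
        f.totalDegree ≤ partialDeg n V (s + 1) := by
  have := hV.isPrime_vanishingIdeal
  have := hW.isPrime_vanishingIdeal
  have hle := vanishingIdeal_anti hVW
  obtain ⟨f, ⟨hfV, hdeg⟩, hfW⟩ : ∃ f ∈ {f | f ∈ vanishingIdeal n V ∧
      f.totalDegree ≤ partialDeg n V (s + 1)}, f ∉ (vanishingIdeal n W : Set _) := by
    refine not_subset.1 fun hsub => ?_
    have hdimW := quotientDim_le_dimAlong (Ideal.span_le.2 hsub) hle
    have hdimV := (hV.partialDeg_le_iff (m := partialDeg n V (s + 1)) hs).1 le_rfl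
    rw [← hW.dim_eq] at hdimW
    have := hdimW.trans hdimV
    omega
  obtain ⟨Q, hQ, hQV⟩ := Ideal.exists_minimalPrimes_le
    (sup_le hle ((Ideal.span_singleton_le_iff_mem _).2 hfV))
  have := hQ.1.1
  obtain ⟨hWQ, hfQ⟩ := sup_le_iff.1 hQ.1.2
  refine ⟨zeroLocus n Q, isIrredVariety_zeroLocus Q, subset_zeroLocus_iff.2 hQV,
    (zeroLocus_anti hWQ).trans hW.1.zeroLocus_vanishingIdeal.subset, ?_, f, ?_, hfW, hdeg⟩
  · rw [dim_zeroLocus, hW.dim_eq, quotientDim_add_one_of_mem_minimalPrimes hfW hQ]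
  · rwa [vanishingIdeal_zeroLocus, ← Ideal.span_singleton_le_iff_mem]

lemma IsIrredVariety.degree_le_prod_partialDeg_mul_degree (hV : IsIrredVariety n V)
    (hs : s ≤ n - dim n V) (hW : IsIrredVariety n W) (hVW : V ⊆ W) (hdim : dim n W = n - s) :
    degree n V ≤ (∏ i ∈ Finset.Icc (s + 1) (n - dim n V), partialDeg n V i) * degree n W := by
  have hVn := hV.dim_le
  induction hs using Nat.decreasingInduction generalizing W with
  | self =>
    have hWV : vanishingIdeal n W = vanishingIdeal n V := by
      have := hV.isPrime_vanishingIdeal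
      have := hW.isPrime_vanishingIdeal
      refine eq_of_le_of_quotientDim_le (vanishingIdeal_anti hVW) ?_
      rw [← hV.dim_eq, ← hW.dim_eq]
      omega
    rw [← hV.1.zeroLocus_vanishingIdeal, ← hWV, hW.1.zeroLocus_vanishingIdeal]
    simp [hdim]
  | of_succ s hs ih =>
    obtain ⟨W', hW', hVW', hW'W, hdim', f, hfW', hfW, hdeg⟩ :=
      hV.exists_hypersurface_section hW hVW hdim hs
    calc degree n V
        ≤ (∏ i ∈ Finset.Icc (s + 1 + 1) (n - dim n V), partialDeg n V i) * degree n W' :=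
          ih hW' hVW' (by omega)
      _ ≤ (∏ i ∈ Finset.Icc (s + 1 + 1) (n - dim n V), partialDeg n V i) *
            (partialDeg n V (s + 1) * degree n W) := by
          gcongr
          exact (hW'.degree_le_totalDegree_mul_degree hW hW'W hdim' hfW' hfW).trans
            (Nat.mul_le_mul_right _ hdeg)
      _ = _ := by
          rw [← Finset.mul_prod_Ioc_eq_prod_Icc (a := s + 1) hs,
            ← Finset.Icc_add_one_left_eq_Ioc, mul_left_comm, mul_assoc]

lemma IsIrredVariety.Delta_le_degree (hV : IsIrredVariety n V) (hs : s ≤ n - dim n V)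
    (hW : IsIrredVariety n W) (hVW : V ⊆ W) (hdim : dim n W = n - s) :
    Delta n V s ≤ degree n W := by
  refine max_le (div_le_of_le_mul₀ (by positivity) (by positivity) ?_) ?_
  · rw [mul_comm]
    exact_mod_cast hV.degree_le_prod_partialDeg_mul_degree hs hW hVW hdim
  · exact_mod_cast hW.degree_pos

end Bezout

section MinimalVariety

variable {n m s : ℕ} {V W : Set (Fin n → ℂ)}

lemma IsIrredVariety.exists_forall_totalDegree_le_mem (hV : IsIrredVariety n V)
    (hs : s ≤ n - dim n V) (hle : partialDeg n V s ≤ m)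
    (hlt : (m : ℕ∞) < partialDegE n V (s + 1)) :
    ∃ W, IsIrredVariety n W ∧ V ⊆ W ∧ dim n W = n - s ∧
      ∀ f ∈ vanishingIdeal n V, f.totalDegree ≤ m → f ∈ vanishingIdeal n W := by
  have := hV.isPrime_vanishingIdeal
  obtain ⟨Q, hQ, hQV, hdim⟩ :=
    exists_mem_minimalPrimes_quotientDim_eq (truncIdeal_le (vanishingIdeal n V) m)
  have := hQ.1.1
  refine ⟨zeroLocus n Q, isIrredVariety_zeroLocus Q, subset_zeroLocus_iff.2 hQV, ?_, ?_⟩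
  · rw [dim_zeroLocus, hdim, hV.dimAlong_truncIdeal_eq hs hle hlt]
  · rw [vanishingIdeal_zeroLocus]
    exact fun f hf hdeg => hQ.1.2 (Ideal.subset_span ⟨hf, hdeg⟩)

lemma IsIrredVariety.deltaSet_le_partialDeg (hV : IsIrredVariety n V) (hs : s ≤ n - dim n V)
    (hW : IsIrredVariety n W) (hVW : V ⊆ W) (hdim : dim n W = n - s)
    (hmem : ∀ f ∈ vanishingIdeal n V, f.totalDegree ≤ partialDeg n V s → f ∈ vanishingIdeal n W) :
    deltaSet n W ≤ partialDeg n V s := by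
  have := hV.isPrime_vanishingIdeal
  have := hW.isPrime_vanishingIdeal
  obtain ⟨T, hT, hspan⟩ :=
    exists_finset_span_eq_truncIdeal (vanishingIdeal n V) (partialDeg n V s)
  obtain ⟨Q, hQ, hQW⟩ := Ideal.exists_minimalPrimes_le
    (Ideal.span_le.2 fun f hf => hmem f (hT f hf).1 (hT f hf).2)
  have := hQ.1.1
  have hQdim : quotientDim Q ≤ n - s :=
    (quotientDim_le_dimAlong (hspan.symm.trans_le hQ.1.2)
      (hQW.trans (vanishingIdeal_anti hVW))).trans ((hV.partialDeg_le_iff hs).1 le_rfl)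
  have hQ_eq : Q = vanishingIdeal n W :=
    eq_of_le_of_quotientDim_le hQW (by rwa [← hW.dim_eq, hdim])
  refine Nat.sInf_le ⟨T, fun f hf => (hT f hf).2, fun X hX => ?_⟩
  rw [hW.isIrredComponent_iff.1 hX, ← hW.1.zeroLocus_vanishingIdeal, ← hQ_eq]
  exact isIrredComponent_zeroLocus_of_mem_minimalPrimes hQ

lemma ChardinPhilippon.mul_degree_le_hilbert {c0 : ℝ} (hCP : ChardinPhilippon n c0)
    (hW : IsIrredVariety n W) (hm : 2 * (n - dim n W) * deltaSet n W ≤ m) :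
    c0 * (m : ℝ) ^ dim n W * degree n W ≤ hilbert n W m := by
  rw [← hW.degreeSum_eq]
  exact hCP W _ ⟨hW.1, hW.2.1, fun X hX => by rw [hW.isIrredComponent_iff.1 hX]⟩ m hm

end MinimalVariety

/-- Lemma 3.5 of the paper: a lower bound for the affine Hilbert function of
an irreducible variety `V` at `m`, when `2 s δ_s(V) ≤ m < δ_{s+1}(V)` and
`c₀ m^{n-s} Δ_s(V) > k`. -/
theorem statement10 (n : ℕ) (c0 : ℝ) (hc0 : 0 < c0) (hCP : ChardinPhilippon n c0)
    (V : Set (Fin n → ℂ)) (d : ℕ) (hV : IsIrredVariety n V) (hd : dim n V = d)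
    (s : ℕ) (hs : s ≤ n - d) (k m : ℕ) (hk : 0 < k) (hm : 0 < m)
    (hm1 : 2 * s * partialDeg n V s ≤ m)
    (hm2 : (m : ℕ∞) < partialDegE n V (s + 1))
    (hkm : (k : ℝ) < c0 * (m : ℝ) ^ (n - s) * Delta n V s) :
    k < hilbert n V m := by
  subst hd
  have hle : partialDeg n V s ≤ m := by
    rcases s.eq_zero_or_pos with rfl | hs0
    · simp [partialDeg]
    · exact (Nat.le_mul_of_pos_left _ (by positivity)).trans hm1
  obtain ⟨W, hW, hVW, hdim, hmem⟩ := hV.exists_forall_totalDegree_le_mem hs hle hm2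
  have hδ : deltaSet n W ≤ partialDeg n V s :=
    hV.deltaSet_le_partialDeg hs hW hVW hdim fun f hf hdeg => hmem f hf (hdeg.trans hle)
  have hcodim : n - dim n W = s := by omega
  have hCPW : c0 * (m : ℝ) ^ dim n W * degree n W ≤ hilbert n W m :=
    hCP.mul_degree_le_hilbert hW <| by
      rw [hcodim]
      exact (Nat.mul_le_mul_left _ hδ).trans hm1
  have hmono : hilbert n W m ≤ hilbert n V m := hilbertFunction_le_of_forall_totalDegree_le hmem
  rw [← Nat.cast_lt (α := ℝ)]
  calc (k : ℝ) < c0 * (m : ℝ) ^ (n - s) * Delta n V s := hkm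
    _ ≤ c0 * (m : ℝ) ^ dim n W * degree n W := by
        rw [hdim]
        gcongr
        exact hV.Delta_le_degree hs hW hVW hdim
    _ ≤ hilbert n W m := hCPW
    _ ≤ hilbert n V m := mod_cast hmono

end Paper
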